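/- arXiv:math/0703017 — 3 statements merged into one kernel-verified Lean document; each statement's English description precedes it below -/
import Mathlib

section
/- Let m ≥ 1, T > 0, k ≥ 0, and let A : [0,T] → ℝ^{m×m} be k-times continuously differentiable, with A(t) a weakly irreducible generator matrix with quasi-stationary distribution ν(t) for every t ∈ [0,T]. Then the map t ↦ ν(t) from [0,T] to ℝ^{1×m} is k-times continuously differentiable. -/
/-!
The matrix `M = A + J`, with `J` the all-ones matrix, turns the constrained system `ν A = 0`,
`∑ ν i = 1` into the square system `ν M = 𝟙`. It is invertible: if `μ M = 0`, multiplying by the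
all-ones column and using that the rows of `A` sum to zero gives `∑ μ i = 0`, hence `μ A = 0`, so
`ν + μ` solves the constrained system and uniqueness forces `μ = 0`. Therefore
`ν = (det M)⁻¹ • 𝟙 adj(M)`, a rational expression in the entries of `A` with nonvanishing
denominator, and it inherits the regularity of `A`.
-/

open MeasureTheory Matrix ProbabilityTheory Filter

/-- An `m × m` real matrix `G` is a generator matrix if its off-diagonal entries are
nonnegative and every row sums to zero. -/
def IsGenerator {m : ℕ} (G : Matrix (Fin m) (Fin m) ℝ) : Prop :=
  (∀ i j, i ≠ j → 0 ≤ G i j) ∧ ∀ i, ∑ j, G i j = 0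

/-- `ν` is the quasi-stationary distribution of a weakly irreducible generator `A`:
it is the unique solution of `ν A = 0`, `∑ ν i = 1`, and it is nonnegative. -/
def IsQuasiStationary {m : ℕ} (A : Matrix (Fin m) (Fin m) ℝ) (ν : Fin m → ℝ) : Prop :=
  ν ᵥ* A = 0 ∧ (∑ i, ν i) = 1 ∧ (∀ i, 0 ≤ ν i) ∧
    ∀ μ : Fin m → ℝ, μ ᵥ* A = 0 → (∑ i, μ i) = 1 → μ = ν

/-- The matrix `𝟙ν` each of whose rows equals the row vector `ν`. -/
def oneNu {m : ℕ} (ν : Fin m → ℝ) : Matrix (Fin m) (Fin m) ℝ :=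
  Matrix.of fun _ j => ν j

lemma contDiffOn_matrix_det {m : ℕ} {n : WithTop ℕ∞} {s : Set ℝ}
    {M : ℝ → Matrix (Fin m) (Fin m) ℝ}
    (hM : ∀ i j, ContDiffOn ℝ n (fun t => M t i j) s) :
    ContDiffOn ℝ n (fun t => (M t).det) s := by
  simp only [Matrix.det_apply']
  exact ContDiffOn.sum fun σ _ => contDiffOn_const.mul (contDiffOn_prod fun i _ => hM _ _)

lemma vecMul_add_ones {m : ℕ} (G : Matrix (Fin m) (Fin m) ℝ) (μ : Fin m → ℝ) (j : Fin m) :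
    (μ ᵥ* (G + Matrix.of fun _ _ => 1)) j = (μ ᵥ* G) j + ∑ i, μ i := by
  simp [Matrix.vecMul, dotProduct, mul_add, Finset.sum_add_distrib]

lemma sum_vecMul_eq_zero {m : ℕ} {G : Matrix (Fin m) (Fin m) ℝ} (hG : IsGenerator G)
    (μ : Fin m → ℝ) : ∑ j, (μ ᵥ* G) j = 0 := by
  simp only [Matrix.vecMul, dotProduct]
  rw [Finset.sum_comm]
  simp [← Finset.mul_sum, hG.2]

/-- Adding the all-ones matrix removes the one-dimensional left kernel of a weakly irreducible
generator. -/
lemma det_add_ones_ne_zero {m : ℕ} (hm : 1 ≤ m) {G : Matrix (Fin m) (Fin m) ℝ} {ν : Fin m → ℝ}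
    (hG : IsGenerator G) (hν : IsQuasiStationary G ν) :
    (G + Matrix.of fun _ _ => 1).det ≠ 0 := by
  intro hdet
  obtain ⟨μ, hμ, hμM⟩ := Matrix.exists_vecMul_eq_zero_iff.mpr hdet
  have hj : ∀ j, (μ ᵥ* G) j + ∑ i, μ i = 0 := fun j => by
    rw [← vecMul_add_ones, hμM, Pi.zero_apply]
  have hsum : ∑ i, μ i = 0 := by
    have h : ∑ j, ((μ ᵥ* G) j + ∑ i, μ i) = 0 := Finset.sum_eq_zero fun j _ => hj j
    rw [Finset.sum_add_distrib, sum_vecMul_eq_zero hG, zero_add, Finset.sum_const,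
      Finset.card_univ, Fintype.card_fin, nsmul_eq_mul] at h
    exact (mul_eq_zero.mp h).resolve_left (by positivity)
  have hker : μ ᵥ* G = 0 := by
    ext j
    simpa [hsum] using hj j
  obtain ⟨h1, h2, -, huniq⟩ := hν
  have h := huniq (ν + μ) (by rw [Matrix.add_vecMul, h1, hker, add_zero])
    (by simp [Finset.sum_add_distrib, h2, hsum])
  exact hμ (by simpa using h)

/-- Cramer's rule for the quasi-stationary distribution. -/
lemma quasiStationary_eq {m : ℕ} (hm : 1 ≤ m) {G : Matrix (Fin m) (Fin m) ℝ} {ν : Fin m → ℝ}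
    (hG : IsGenerator G) (hν : IsQuasiStationary G ν) (i : Fin m) :
    ν i = (G + Matrix.of fun _ _ => 1).det⁻¹ *
      ∑ j, (G + Matrix.of fun _ _ => 1).adjugate j i := by
  have hdet := det_add_ones_ne_zero hm hG hν
  have hνM : ν ᵥ* (G + Matrix.of fun _ _ => 1) = fun _ => 1 := by
    ext j
    rw [vecMul_add_ones, hν.1, hν.2.1, Pi.zero_apply, zero_add]
  have h := congrArg (fun v => (v ᵥ* (G + Matrix.of fun _ _ => 1).adjugate) i) hνM
  simp only [Matrix.vecMul_vecMul, Matrix.mul_adjugate, Matrix.vecMul_smul, Matrix.vecMul_one,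
    Pi.smul_apply, smul_eq_mul] at h
  rw [eq_inv_mul_iff_mul_eq₀ hdet, h]
  simp [Matrix.vecMul, dotProduct]

/-- If `A : [0,T] → ℝ^{m×m}` is `Cᵏ` and `A(t)` is a weakly irreducible
generator with quasi-stationary distribution `ν(t)` for each `t ∈ [0,T]`, then
`t ↦ ν(t)` is `Cᵏ` on `[0,T]`. -/
theorem quasiStationary_contDiffOn {m : ℕ} (hm : 1 ≤ m) (T : ℝ) (hT : 0 < T) (k : ℕ)
    (A : ℝ → Matrix (Fin m) (Fin m) ℝ) (ν : ℝ → Fin m → ℝ)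
    (hA : ContDiffOn ℝ (k : ℕ∞) (fun t (i j : Fin m) => A t i j) (Set.Icc (0:ℝ) T))
    (hgen : ∀ t ∈ Set.Icc (0:ℝ) T, IsGenerator (A t))
    (hqs : ∀ t ∈ Set.Icc (0:ℝ) T, IsQuasiStationary (A t) (ν t)) :
    ContDiffOn ℝ (k : ℕ∞) ν (Set.Icc (0:ℝ) T) := by
  have hM : ∀ i j, ContDiffOn ℝ (k : ℕ∞)
      (fun t => (A t + Matrix.of fun _ _ => 1 : Matrix (Fin m) (Fin m) ℝ) i j)
      (Set.Icc (0:ℝ) T) := fun i j =>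
    (contDiffOn_pi.mp (contDiffOn_pi.mp hA i) j).add contDiffOn_const
  refine contDiffOn_pi.mpr fun i => ContDiffOn.congr ?_ fun t ht =>
    quasiStationary_eq hm (hgen t ht) (hqs t ht) i
  refine ((contDiffOn_matrix_det hM).inv fun t ht =>
    det_add_ones_ne_zero hm (hgen t ht) (hqs t ht)).mul (ContDiffOn.sum fun j _ => ?_)
  simp only [Matrix.adjugate_apply]
  refine contDiffOn_matrix_det fun a b => ?_
  by_cases hai : a = i
  · subst hai
    simpa using contDiffOn_const
  · simpa [Matrix.updateRow_ne hai] using hM a b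
end

section
/- Let n ≥ 0. Assume each A(t), B(t) is a generator matrix, A(t) is weakly irreducible for every t ∈ [0,T] with quasi-stationary distribution ν(t), A is (n+2)-times continuously differentiable and B is (n+1)-times continuously differentiable on [0,T]. Then there exist matrix-valued functions Φ_0, …, Φ_n on [0,T] and Ψ_0, …, Ψ_n on [0,T] × [0,∞), and constants K > 0, κ₀ > 0, ε₀ > 0, such that: (a) Φ_0(t) = 𝟙ν(t) and each Φ_k is (n+2−k)-times continuously differentiable; (b) Φ_k(t)A(t) = Φ'_{k−1}(t) − Φ_{k−1}(t)B(t) for k = 1, …, n; (c) ∂_τ Ψ_0(t₀,τ) = Ψ_0(t₀,τ)A(t₀) with Ψ_0(t₀,0) = I − Φ_0(t₀); (d) for k = 1, …, n, ∂_τ Ψ_k(t₀,τ) = Ψ_k(t₀,τ)A(t₀) + R_k(t₀,τ) with Ψ_k(t₀,0) = −Φ_k(t₀), where R_k(t₀,τ) = Σ_{i=0}^{k−1} Ψ_{k−i−1}(t₀,τ) [ (τ^{i+1}/(i+1)!) A^{(i+1)}(t₀) + (τ^i/i!) B^{(i)}(t₀) ]; (e) ‖Ψ_k(t₀,τ)‖∞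 ≤ K e^{−κ₀ τ} for all t₀ ∈ [0,T], τ ≥ 0 and 0 ≤ k ≤ n; and (f) for all ε ∈ (0, ε₀] and all 0 ≤ t₀ ≤ t ≤ T, ‖P_ε(t₀,t) − Σ_{k=0}^n ε^k Φ_k(t) − Σ_{k=0}^n ε^k Ψ_k(t₀, (t−t₀)/ε)‖∞ ≤ K ε^{n+1}. -/
/-!
The proof is a matched asymptotic expansion closed by a dissipativity estimate, in the maximal
row-sum norm.

*Decay.* A weakly irreducible generator `A` has an exponential with a strictly positive column
(`exists_pos_column`). Hence right multiplication by `exp A` strictly contracts matrices with zero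
row sums (`norm_mul_exp_lt`), and compactness of `[0, T]` gives exponential decay uniform in `t`
(`exists_uniform_decay`).

*Outer terms.* `A + 𝟙𝟙ᵀ` is invertible, and right multiplication by its inverse solves
`Φ A = F` for every `F` with zero row sums. This defines the `Φ_k` recursively (`outer`), each step
costing one derivative.

*Layer terms.* The `Ψ_k` are given by variation of constants. Initial values and forcing terms have
zero row sums, so the uniform decay carries over to every `Ψ_k` (`exists_inner`).

*Remainder.* Both hierarchies are continued one step further, to `k = n + 1`. The sum of the outer
and layer terms then has the initial value `I`; its residual in the forward equation telescopes in
the outer part (`outer_residual`), and in the layer part it becomes a sum of the `Ψ_j` times Taylor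
errors of `A` and `B` (`inner_residual`). It is `O(ε^{n+1})`. As `1 + h G` is stochastic for a
generator `G` and small `h > 0`, the norm of the error grows at most at the rate of the residual
(`norm_le_of_dissipative`), whatever the size of `A / ε`. The terms of order `n + 1` are themselves
`O(ε^{n+1})` and are dropped at the end.
-/

open MeasureTheory Matrix ProbabilityTheory Filter

/-- `P` solves, on `[t₀, T]`, the forward equation `∂ₜ P(t) = P(t) G(t)`, `P(t₀) = I`
(stated entrywise). -/
def IsForwardSolution {m : ℕ} (G : ℝ → Matrix (Fin m) (Fin m) ℝ) (T t₀ : ℝ)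
    (P : ℝ → Matrix (Fin m) (Fin m) ℝ) : Prop :=
  P t₀ = 1 ∧ ∀ t ∈ Set.Icc t₀ T, ∀ i j,
    HasDerivWithinAt (fun u => P u i j) ((P t * G t) i j) (Set.Icc t₀ T) t

/-- Hypothesis (A1): `A(t)`, `B(t)` are generator matrices, `A(t)` is weakly irreducible with
quasi-stationary distribution `ν(t)` on `[0,T]`, `A` is `C²` and `B` is `C¹` on `[0,T]`. -/
def HypA1 {m : ℕ} (T : ℝ) (A B : ℝ → Matrix (Fin m) (Fin m) ℝ) (ν : ℝ → Fin m → ℝ) : Prop :=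
  (∀ t ∈ Set.Icc (0:ℝ) T, IsGenerator (A t)) ∧
  (∀ t ∈ Set.Icc (0:ℝ) T, IsGenerator (B t)) ∧
  (∀ t ∈ Set.Icc (0:ℝ) T, IsQuasiStationary (A t) (ν t)) ∧
  ContDiffOn ℝ 2 (fun t (i j : Fin m) => A t i j) (Set.Icc (0:ℝ) T) ∧
  ContDiffOn ℝ 1 (fun t (i j : Fin m) => B t i j) (Set.Icc (0:ℝ) T)

/-- The remainder term `R_k(t₀, τ)` of the initial-layer hierarchy:
`R_k(t₀,τ) = ∑_{i=0}^{k-1} Ψ_{k-i-1}(t₀,τ) [ (τ^{i+1}/(i+1)!) A^{(i+1)}(t₀) + (τ^i/i!) B^{(i)}(t₀) ]`,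
derivatives taken within `[0,T]` (entrywise). -/
noncomputable def Rterm {m : ℕ} (T : ℝ) (A B : ℝ → Matrix (Fin m) (Fin m) ℝ)
    (Ψ : ℕ → ℝ → ℝ → Matrix (Fin m) (Fin m) ℝ) (k : ℕ) (t₀ τ : ℝ) :
    Matrix (Fin m) (Fin m) ℝ :=
  ∑ l ∈ Finset.range k,
    Ψ (k - l - 1) t₀ τ *
      Matrix.of (fun b j =>
        τ ^ (l + 1) / (Nat.factorial (l + 1)) *
          iteratedDerivWithin (l + 1) (fun u => A u b j) (Set.Icc (0:ℝ) T) t₀ +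
        τ ^ l / (Nat.factorial l) *
          iteratedDerivWithin l (fun u => B u b j) (Set.Icc (0:ℝ) T) t₀)

/-! ### Dissipative linear equations in a Banach algebra -/

section Banach

variable {E : Type*} [NormedRing E] [NormedAlgebra ℝ E]

/-- Growth bound for `X' = X G + s`: if `G` is dissipative, i.e. `‖1 + h G‖ ≤ 1` for small `h > 0`,
then the right slope of `‖X‖` is at most `‖s‖`, so `‖X‖` grows at most linearly at rate `sup ‖s‖`. -/
theorem norm_le_of_dissipative {a b M : ℝ} {X G s : ℝ → E}
    (hX : ∀ t ∈ Set.Icc a b, HasDerivWithinAt X (X t * G t + s t) (Set.Icc a b) t)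
    (hG : ∀ t ∈ Set.Icc a b, ∀ᶠ h in nhdsWithin (0 : ℝ) (Set.Ioi 0), ‖1 + h • G t‖ ≤ 1)
    (hs : ∀ t ∈ Set.Icc a b, ‖s t‖ ≤ M) :
    ∀ t ∈ Set.Icc a b, ‖X t‖ ≤ ‖X a‖ + M * (t - a) := by
  have hcont : ContinuousOn X (Set.Icc a b) := fun t ht => (hX t ht).continuousWithinAt
  refine image_le_of_liminf_slope_right_le_deriv_boundary (f := fun t => ‖X t‖)
    (B := fun t => ‖X a‖ + M * (t - a)) (B' := fun _ => M) hcont.norm (by simp)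
    (by fun_prop) ?_ ?_
  · intro x _
    have := (((hasDerivAt_id x).sub_const a).const_mul M).const_add ‖X a‖
    simpa using this.hasDerivWithinAt
  · intro x hx r hr
    have hx' : x ∈ Set.Icc a b := ⟨hx.1, hx.2.le⟩
    have hd : HasDerivWithinAt X (X x * G x + s x) (Set.Ioi x) x :=
      ((hX x hx').mono_of_mem_nhdsWithin (Icc_mem_nhdsGE_of_mem hx)).mono
        Set.Ioi_subset_Ici_self
    have hslope := (hasDerivWithinAt_iff_tendsto_slope' (by simp)).1 hd
    have hclose : ∀ᶠ z in nhdsWithin x (Set.Ioi x),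
        ‖slope X x z - (X x * G x + s x)‖ < r - M := by
      have := (tendsto_iff_norm_sub_tendsto_zero.1 hslope).eventually
        (gt_mem_nhds (sub_pos.2 hr))
      exact this
    have hshift : Tendsto (fun z : ℝ => z - x) (nhdsWithin x (Set.Ioi x))
        (nhdsWithin 0 (Set.Ioi 0)) := by
      refine tendsto_nhdsWithin_iff.2 ⟨?_, ?_⟩
      · have : Tendsto (fun z : ℝ => z - x) (nhds x) (nhds (x - x)) :=
          (continuous_id.sub continuous_const).tendsto x
        rw [sub_self] at this
        exact this.mono_left nhdsWithin_le_nhds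
      · filter_upwards [self_mem_nhdsWithin] with z hz
        exact sub_pos.2 (Set.mem_Ioi.1 hz)
    have hev : ∀ᶠ z in nhdsWithin x (Set.Ioi x), slope (fun t => ‖X t‖) x z < r := by
      filter_upwards [hclose, hshift.eventually (hG x hx'), self_mem_nhdsWithin]
        with z h1 h2 h3
      have hzx : 0 < z - x := sub_pos.2 (Set.mem_Ioi.1 h3)
      have key : X z = X x * (1 + (z - x) • G x) + (z - x) • s x
          + (z - x) • (slope X x z - (X x * G x + s x)) := by
        rw [slope_def_module, smul_sub, smul_smul, mul_inv_cancel₀ hzx.ne', one_smul,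
          mul_add, mul_one, smul_add, mul_smul_comm]
        abel
      have hn : ‖X z‖ < ‖X x‖ + (z - x) * r := by
        calc ‖X z‖ ≤ ‖X x * (1 + (z - x) • G x)‖ + ‖(z - x) • s x‖
              + ‖(z - x) • (slope X x z - (X x * G x + s x))‖ := by
                conv_lhs => rw [key]
                exact norm_add₃_le
          _ ≤ ‖X x‖ * 1 + (z - x) * M
              + (z - x) * ‖slope X x z - (X x * G x + s x)‖ := by
                rw [norm_smul, norm_smul, Real.norm_of_nonneg hzx.le]
                gcongr
                · exact (norm_mul_le _ _).trans (by gcongr)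
                · exact hs x hx'
          _ < ‖X x‖ * 1 + (z - x) * M + (z - x) * (r - M) := by gcongr
          _ = ‖X x‖ + (z - x) * r := by ring
      rw [slope_def_field, div_lt_iff₀ hzx]
      linarith
    exact hev.frequently

/-- Variation of constants for `ψ' = ψ a + R` with constant coefficient `a`. -/
theorem exists_linear_ode [CompleteSpace E] (a x₀ : E) (R : ℝ → E) (hR : Continuous R) :
    ∃ ψ : ℝ → E, ψ 0 = x₀ ∧ (∀ τ, HasDerivAt ψ (ψ τ * a + R τ) τ) ∧
      ∀ τ, 0 ≤ τ → ∀ M, (∀ s ∈ Set.Icc 0 τ, ‖R s * NormedSpace.exp ((τ - s) • a)‖ ≤ M) →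
        ‖ψ τ‖ ≤ ‖x₀ * NormedSpace.exp (τ • a)‖ + M * τ := by
  have hexp : ∀ τ : ℝ, HasDerivAt (fun u : ℝ => NormedSpace.exp (u • a))
      (NormedSpace.exp (τ • a) * a) τ := fun τ => hasDerivAt_exp_smul_const a τ
  have hexpc : Continuous (fun u : ℝ => NormedSpace.exp (u • a)) :=
    continuous_iff_continuousAt.2 fun τ => (hexp τ).continuousAt
  have hF : Continuous (fun s : ℝ => R s * NormedSpace.exp ((-s) • a)) :=
    hR.mul (hexpc.comp continuous_neg)
  have hadd : ∀ u v : ℝ, NormedSpace.exp (u • a) * NormedSpace.exp (v • a)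
      = NormedSpace.exp ((u + v) • a) := by
    intro u v
    let _ : NormedAlgebra ℚ E := NormedAlgebra.restrictScalars ℚ ℝ E
    rw [add_smul, NormedSpace.exp_add_of_commute]
    exact ((Commute.refl a).smul_left u).smul_right v
  refine ⟨fun τ => (x₀ + ∫ s in (0:ℝ)..τ, R s * NormedSpace.exp ((-s) • a))
    * NormedSpace.exp (τ • a), by simp, ?_, ?_⟩
  · intro τ
    have h1 : HasDerivAt (fun τ => x₀ + ∫ s in (0:ℝ)..τ, R s * NormedSpace.exp ((-s) • a))
        (R τ * NormedSpace.exp ((-τ) • a)) τ :=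
      (intervalIntegral.integral_hasDerivAt_right (hF.intervalIntegrable _ _)
        (hF.stronglyMeasurableAtFilter _ _) hF.continuousAt).const_add _
    refine (h1.mul (hexp τ)).congr_deriv ?_
    rw [mul_assoc (R τ), hadd, neg_add_cancel, zero_smul, NormedSpace.exp_zero, mul_one,
      mul_assoc, add_comm]
  · intro τ hτ M hM
    have heq : (x₀ + ∫ s in (0:ℝ)..τ, R s * NormedSpace.exp ((-s) • a))
        * NormedSpace.exp (τ • a) = x₀ * NormedSpace.exp (τ • a)
          + ∫ s in (0:ℝ)..τ, R s * NormedSpace.exp ((τ - s) • a) := by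
      rw [add_mul]
      congr 1
      have := (ContinuousLinearMap.intervalIntegral_comp_comm
        ((ContinuousLinearMap.mul ℝ E).flip (NormedSpace.exp (τ • a)))
        (hF.intervalIntegrable (μ := volume) 0 τ))
      simp only [ContinuousLinearMap.flip_apply, ContinuousLinearMap.mul_apply'] at this
      rw [← this]
      congr 1
      ext s
      rw [mul_assoc, hadd]
      congr 3
      ring
    simp only
    rw [heq]
    refine (norm_add_le _ _).trans ?_
    gcongr
    have := intervalIntegral.norm_integral_le_of_norm_le_const (a := 0) (b := τ) (C := M)
      (f := fun s => R s * NormedSpace.exp ((τ - s) • a)) (by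
        intro s hs
        rw [Set.uIoc_of_le hτ] at hs
        exact hM s ⟨hs.1.le, hs.2⟩)
    simpa [abs_of_nonneg hτ] using this

end Banach

/-! ### The maximal row-sum norm -/

section MatrixNorm
open scoped Matrix.Norms.Operator
variable {m : ℕ}

theorem row_sum_le_norm (X : Matrix (Fin m) (Fin m) ℝ) (i : Fin m) : ∑ j, |X i j| ≤ ‖X‖ := by
  rw [Matrix.linfty_opNorm_def]
  have h := Finset.le_sup (f := fun i => ∑ j, ‖X i j‖₊) (Finset.mem_univ i)
  have := NNReal.coe_le_coe.2 h
  simpa using this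

theorem norm_le_of_row_sum {X : Matrix (Fin m) (Fin m) ℝ} {C : ℝ} (hC : 0 ≤ C)
    (h : ∀ i, ∑ j, |X i j| ≤ C) : ‖X‖ ≤ C := by
  rw [Matrix.linfty_opNorm_def]
  lift C to NNReal using hC
  refine NNReal.coe_le_coe.2 (Finset.sup_le fun i _ => ?_)
  rw [← NNReal.coe_le_coe]
  simpa using h i

theorem norm_lt_of_row_sum {X : Matrix (Fin m) (Fin m) ℝ} {C : ℝ} (hC : 0 < C)
    (h : ∀ i, ∑ j, |X i j| < C) : ‖X‖ < C := by
  rw [Matrix.linfty_opNorm_def]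
  lift C to NNReal using hC.le
  refine NNReal.coe_lt_coe.2 ((Finset.sup_lt_iff (by exact_mod_cast hC)).2 fun i _ => ?_)
  rw [← NNReal.coe_lt_coe]
  simpa using h i

theorem hasDerivWithinAt_matrix {X : ℝ → Matrix (Fin m) (Fin m) ℝ}
    {X' : Matrix (Fin m) (Fin m) ℝ} {s : Set ℝ} {t : ℝ} :
    HasDerivWithinAt X X' s t ↔
      ∀ i j, HasDerivWithinAt (fun u => X u i j) (X' i j) s t := by
  have h1 : HasDerivWithinAt X X' s t ↔ ∀ i, HasDerivWithinAt (fun u => X u i) (X' i) s t :=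
    hasDerivWithinAt_pi
  rw [h1]
  exact forall_congr' fun i => hasDerivWithinAt_pi

theorem continuousOn_matrix_iff {α : Type*} [TopologicalSpace α] {X : α → Matrix (Fin m) (Fin m) ℝ} {s : Set α} :
    ContinuousOn X s ↔ ∀ i j, ContinuousOn (fun u => X u i j) s := by
  have h1 : ContinuousOn X s ↔ ∀ i, ContinuousOn (fun u => X u i) s :=
    continuousOn_pi
  rw [h1]
  exact forall_congr' fun i => continuousOn_pi

end MatrixNorm

/-! ### Exponentials of generators -/

section Generator
open scoped Matrix.Norms.Operator
variable {m : ℕ}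

theorem IsGenerator.mulVec_one {G : Matrix (Fin m) (Fin m) ℝ} (hG : IsGenerator G) :
    G *ᵥ 1 = 0 := by
  ext i
  simpa [Matrix.mulVec, dotProduct] using hG.2 i

/-- A generator becomes entrywise nonnegative after adding a large multiple of the identity. -/
theorem IsGenerator.exists_shift {G : Matrix (Fin m) (Fin m) ℝ} (hG : IsGenerator G) :
    ∃ c : ℝ, 0 < c ∧ ∀ i j, 0 ≤ (G + c • (1 : Matrix (Fin m) (Fin m) ℝ)) i j := by
  refine ⟨1 + ∑ i, |G i i|, by positivity, fun i j => ?_⟩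
  by_cases hij : i = j
  · subst hij
    have h1 : |G i i| ≤ ∑ i, |G i i| :=
      Finset.single_le_sum (f := fun i => |G i i|) (fun _ _ => abs_nonneg _) (Finset.mem_univ i)
    have h2 := neg_abs_le (G i i)
    simp only [Matrix.add_apply, Matrix.smul_apply, Matrix.one_apply_eq, smul_eq_mul]
    linarith
  · simpa [Matrix.one_apply_ne hij] using hG.1 i j hij

/-- Generators are dissipative: `1 + h G` is a stochastic matrix for small `h > 0`. -/
theorem IsGenerator.norm_one_add_smul_le {G : Matrix (Fin m) (Fin m) ℝ} (hG : IsGenerator G) :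
    ∀ᶠ h in nhdsWithin (0 : ℝ) (Set.Ioi 0), ‖1 + h • G‖ ≤ 1 := by
  obtain ⟨c, hc, hpos⟩ := hG.exists_shift
  have hmem : Set.Ioo (0 : ℝ) c⁻¹ ∈ nhdsWithin (0 : ℝ) (Set.Ioi 0) :=
    Ioo_mem_nhdsGT (by positivity)
  filter_upwards [hmem] with h hh
  have hhc : h * c ≤ 1 := by
    have := mul_le_mul_of_nonneg_right hh.2.le hc.le
    rwa [inv_mul_cancel₀ hc.ne'] at this
  have hnn : ∀ i j, 0 ≤ (1 + h • G) i j := by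
    intro i j
    have h1 := mul_nonneg hh.1.le (hpos i j)
    by_cases hij : i = j
    · subst hij
      simp only [Matrix.add_apply, Matrix.smul_apply, Matrix.one_apply_eq, smul_eq_mul,
        mul_one] at h1 ⊢
      nlinarith
    · simpa [Matrix.one_apply_ne hij] using h1
  refine norm_le_of_row_sum zero_le_one fun i => ?_
  simp_rw [abs_of_nonneg (hnn i _)]
  simp [Matrix.add_apply, Finset.sum_add_distrib, ← Finset.mul_sum, hG.2 i, Matrix.one_apply]

theorem IsGenerator.smul {G : Matrix (Fin m) (Fin m) ℝ} (hG : IsGenerator G) {c : ℝ}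
    (hc : 0 ≤ c) : IsGenerator (c • G) :=
  ⟨fun i j hij => mul_nonneg hc (hG.1 i j hij), fun i => by
    simp [← Finset.mul_sum, hG.2 i]⟩

theorem IsGenerator.add {G H : Matrix (Fin m) (Fin m) ℝ} (hG : IsGenerator G)
    (hH : IsGenerator H) : IsGenerator (G + H) :=
  ⟨fun i j hij => add_nonneg (hG.1 i j hij) (hH.1 i j hij), fun i => by
    simp [Finset.sum_add_distrib, hG.2 i, hH.2 i]⟩

theorem norm_one_le : ‖(1 : Matrix (Fin m) (Fin m) ℝ)‖ ≤ 1 :=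
  norm_le_of_row_sum zero_le_one fun i => by simp [Matrix.one_apply, apply_ite]

theorem IsGenerator.norm_exp_le {G : Matrix (Fin m) (Fin m) ℝ} (hG : IsGenerator G) {τ : ℝ}
    (hτ : 0 ≤ τ) : ‖NormedSpace.exp (τ • G)‖ ≤ 1 := by
  have := norm_le_of_dissipative (a := 0) (b := τ) (M := 0) (s := fun _ => 0)
    (X := fun u : ℝ => NormedSpace.exp (u • G)) (G := fun _ => G)
    (fun t _ =>
      ((hasDerivAt_exp_smul_const G t).congr_deriv (add_zero _).symm).hasDerivWithinAt)
    (fun t _ => hG.norm_one_add_smul_le) (by simp) τ ⟨hτ, le_rfl⟩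
  simp only [zero_smul, NormedSpace.exp_zero, zero_mul, add_zero] at this
  exact this.trans norm_one_le

theorem exp_hasSum (S : Matrix (Fin m) (Fin m) ℝ) :
    HasSum (fun p : ℕ => ((p.factorial : ℝ)⁻¹) • S ^ p) (NormedSpace.exp S) :=
  NormedSpace.exp_series_hasSum_exp' (𝕂 := ℝ) S

theorem exp_mulVec_one {S : Matrix (Fin m) (Fin m) ℝ} (hS : S *ᵥ 1 = 0) :
    NormedSpace.exp S *ᵥ 1 = (1 : Fin m → ℝ) := by
  have h := (exp_hasSum S).map
    (({ toFun := fun X => X *ᵥ 1, map_zero' := by simp,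
        map_add' := fun X Y => Matrix.add_mulVec X Y 1 } :
      Matrix (Fin m) (Fin m) ℝ →+ (Fin m → ℝ)))
    (by
      change Continuous fun X : Matrix (Fin m) (Fin m) ℝ => X *ᵥ (1 : Fin m → ℝ)
      fun_prop)
  refine h.unique ?_
  have h0 := hasSum_single (f := fun p : ℕ => (((p.factorial : ℝ)⁻¹) • S ^ p) *ᵥ (1 : Fin m → ℝ)) 0
    (by
      intro p hp
      obtain ⟨q, rfl⟩ := Nat.exists_eq_succ_of_ne_zero hp
      simp only [Matrix.smul_mulVec, pow_succ, ← Matrix.mulVec_mulVec, hS, Matrix.mulVec_zero,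
        smul_zero])
  simp only [Nat.factorial_zero, Nat.cast_one, inv_one, pow_zero, one_smul, Matrix.one_mulVec]
    at h0
  exact h0

theorem pow_nonneg_entries {S : Matrix (Fin m) (Fin m) ℝ} (hS : ∀ i j, 0 ≤ S i j) (p : ℕ) :
    ∀ i j, 0 ≤ (S ^ p) i j := by
  induction p with
  | zero => intro i j; rw [pow_zero, Matrix.one_apply]; split_ifs <;> simp
  | succ p ih =>
    intro i j
    rw [pow_succ, Matrix.mul_apply]
    exact Finset.sum_nonneg fun k _ => mul_nonneg (ih i k) (hS k j)

theorem exp_entry_ge {S : Matrix (Fin m) (Fin m) ℝ} (hS : ∀ i j, 0 ≤ S i j) (p : ℕ)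
    (i j : Fin m) : ((p.factorial : ℝ)⁻¹) * (S ^ p) i j ≤ NormedSpace.exp S i j := by
  have h := (exp_hasSum S).map (Matrix.entryAddMonoidHom ℝ i j)
    (by
      change Continuous fun X : Matrix (Fin m) (Fin m) ℝ => X i j
      fun_prop)
  exact le_hasSum h p fun q _ =>
    mul_nonneg (by positivity) (pow_nonneg_entries hS q i j)

theorem exp_shift (A : Matrix (Fin m) (Fin m) ℝ) (c : ℝ) :
    NormedSpace.exp A = Real.exp (-c) • NormedSpace.exp (A + c • (1 : Matrix (Fin m) (Fin m) ℝ)) := by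
  have h1 : NormedSpace.exp ((-c) • (1 : Matrix (Fin m) (Fin m) ℝ)) = Real.exp (-c) • 1 := by
    rw [Real.exp_eq_exp_ℝ, ← Algebra.algebraMap_eq_smul_one, ← Algebra.algebraMap_eq_smul_one]
    exact (NormedSpace.algebraMap_exp_comm (-c)).symm
  have h2 : A = (-c) • (1 : Matrix (Fin m) (Fin m) ℝ) + (A + c • 1) := by
    rw [neg_smul]; abel
  conv_lhs => rw [h2]
  rw [Matrix.exp_add_of_commute, h1, smul_mul_assoc, one_mul]
  exact (Commute.one_left _).smul_left _

theorem IsGenerator.exp_nonneg {A : Matrix (Fin m) (Fin m) ℝ} (hA : IsGenerator A) (i j : Fin m) :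
    0 ≤ NormedSpace.exp A i j := by
  obtain ⟨c, -, hc⟩ := hA.exists_shift
  rw [exp_shift A c, Matrix.smul_apply, smul_eq_mul]
  refine mul_nonneg (Real.exp_pos _).le ?_
  have h := exp_entry_ge hc 0 i j
  have h' := mul_nonneg (by positivity : (0:ℝ) ≤ ((Nat.factorial 0 : ℝ))⁻¹)
    (pow_nonneg_entries hc 0 i j)
  exact h'.trans h

/-- For a weakly irreducible generator, `exp A` has a column all of whose entries are positive: every
state leads to any state `j` charged by `ν`. Otherwise the states not leading to `j` form a closed
class; a left null vector supported on this class contradicts uniqueness of `ν`. -/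
theorem exists_pos_column {A : Matrix (Fin m) (Fin m) ℝ} {ν : Fin m → ℝ} (hA : IsGenerator A)
    (hν : IsQuasiStationary A ν) : ∃ j, ∀ i, 0 < NormedSpace.exp A i j := by
  obtain ⟨hν0, hν1, hνnn, huniq⟩ := hν
  obtain ⟨c, -, hc⟩ := hA.exists_shift
  obtain ⟨j, -, hj⟩ : ∃ j ∈ Finset.univ, 0 < ν j := by
    by_contra! hcon
    have : ∑ i, ν i ≤ 0 := Finset.sum_nonpos fun i hi => hcon i hi
    linarith
  set S := A + c • (1 : Matrix (Fin m) (Fin m) ℝ) with hS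
  -- every state reaches `j`
  have hreach : ∀ i, ∃ p : ℕ, 0 < (S ^ p) i j := by
    by_contra! hcon
    obtain ⟨i₀, hi₀⟩ := hcon
    classical
    have hclosed : ∀ i k, (∀ p : ℕ, (S ^ p) i j ≤ 0) → ¬ (∀ p : ℕ, (S ^ p) k j ≤ 0) →
        A i k = 0 := by
      intro i k hi hk
      have hik : i ≠ k := fun h => hk (h ▸ hi)
      push Not at hk
      obtain ⟨p, hp⟩ := hk
      have h1 := hi (p + 1)
      rw [pow_succ', Matrix.mul_apply] at h1
      have h2 : S i k * (S ^ p) k j ≤ ∑ l, S i l * (S ^ p) l j :=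
        Finset.single_le_sum (f := fun l => S i l * (S ^ p) l j)
          (fun l _ => mul_nonneg (hc i l) (pow_nonneg_entries hc p l j)) (Finset.mem_univ k)
      have h3 : S i k ≤ 0 := by
        by_contra! h
        have := mul_pos h hp
        linarith
      have h4 : S i k = A i k := by simp [hS, Matrix.one_apply_ne hik]
      rw [h4] at h3
      exact le_antisymm h3 (hA.1 i k hik)
    let f : {i : Fin m // ∀ p : ℕ, (S ^ p) i j ≤ 0} → Fin m := Subtype.val
    have hdet : ∃ v : {i : Fin m // ∀ p : ℕ, (S ^ p) i j ≤ 0} → ℝ, v ≠ 0 ∧ v ᵥ* (A.submatrix f f) = 0 := by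
      rw [Matrix.exists_vecMul_eq_zero_iff, ← Matrix.exists_mulVec_eq_zero_iff]
      refine ⟨1, fun h => ?_, ?_⟩
      · have := congrFun h ⟨i₀, hi₀⟩
        simp at this
      · ext i
        have h1 := hA.2 i.1
        rw [← Fintype.sum_subtype_add_sum_subtype (fun i => ∀ p : ℕ, (S ^ p) i j ≤ 0)] at h1
        have h2 : ∑ k : {k // ¬ ∀ p : ℕ, (S ^ p) k j ≤ 0}, A i.1 k.1 = 0 :=
          Finset.sum_eq_zero fun k _ => hclosed _ _ i.2 k.2
        rw [h2, add_zero] at h1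
        simpa [Matrix.mulVec, dotProduct, f] using h1
    obtain ⟨v, hv0, hv⟩ := hdet
    let μ : Fin m → ℝ := fun i => if h : ∀ p : ℕ, (S ^ p) i j ≤ 0 then v ⟨i, h⟩ else 0
    have hμsub : ∀ i : {i : Fin m // ∀ p : ℕ, (S ^ p) i j ≤ 0}, μ i.1 = v i := fun i => by
      simp only [μ]
      rw [dif_pos i.2]
    have hμnot : ∀ i : {k // ¬ ∀ p : ℕ, (S ^ p) k j ≤ 0}, μ i.1 = 0 := fun i => by
      simp only [μ]
      rw [dif_neg i.2]
    have hμA : μ ᵥ* A = 0 := by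
      ext k
      simp only [Matrix.vecMul, dotProduct, Pi.zero_apply]
      rw [← Fintype.sum_subtype_add_sum_subtype (fun i => ∀ p : ℕ, (S ^ p) i j ≤ 0)]
      have h2 : ∑ i : {k // ¬ ∀ p : ℕ, (S ^ p) k j ≤ 0}, μ i.1 * A i.1 k = 0 :=
        Finset.sum_eq_zero fun i _ => by rw [hμnot i, zero_mul]
      rw [h2, add_zero]
      by_cases hk : ∀ p : ℕ, (S ^ p) k j ≤ 0
      · have := congrFun hv ⟨k, hk⟩
        simp only [Matrix.vecMul, dotProduct, Pi.zero_apply, Matrix.submatrix_apply, f] at this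
        simp only [hμsub]
        convert this
      · exact Finset.sum_eq_zero fun i _ => by rw [hclosed _ _ i.2 hk, mul_zero]
    have hμj : μ j = 0 := by
      simp only [μ]
      rw [dif_neg]
      intro h
      have := h 0
      rw [pow_zero, Matrix.one_apply_eq] at this
      linarith
    -- a left null vector of total mass `s` is `s • ν`
    have hμν : μ = (∑ i, μ i) • ν := by
      have := huniq (ν + μ - (∑ i, μ i) • ν)
        (by rw [Matrix.sub_vecMul, Matrix.add_vecMul, Matrix.smul_vecMul, hν0, hμA]; simp)
        (by simp [Finset.sum_add_distrib, ← Finset.mul_sum, hν1])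
      have h2 : μ - (∑ i, μ i) • ν = 0 := by
        rw [add_sub_assoc] at this
        simpa using this
      exact sub_eq_zero.1 h2
    have hsum : ∑ i, μ i = 0 := by
      have := congrFun hμν j
      rw [hμj, Pi.smul_apply, smul_eq_mul] at this
      rcases mul_eq_zero.1 this.symm with h | h
      · exact h
      · linarith
    rw [hsum, zero_smul] at hμν
    apply hv0
    ext i
    rw [← hμsub i, hμν]
    rfl
  refine ⟨j, fun i => ?_⟩
  obtain ⟨p, hp⟩ := hreach i
  rw [exp_shift A c, Matrix.smul_apply, smul_eq_mul]
  refine mul_pos (Real.exp_pos _) (lt_of_lt_of_le ?_ (exp_entry_ge hc p i j))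
  positivity

/-- Doeblin-type strict contraction: on matrices with zero row sums, right multiplication by `exp A`
strictly decreases the norm, because of the cancellation in the positive column of `exp A`. -/
theorem norm_mul_exp_lt {A X : Matrix (Fin m) (Fin m) ℝ} {ν : Fin m → ℝ} (hA : IsGenerator A)
    (hν : IsQuasiStationary A ν) (hX : X *ᵥ 1 = 0) (hX0 : X ≠ 0) :
    ‖X * NormedSpace.exp A‖ < ‖X‖ := by
  obtain ⟨j, hj⟩ := exists_pos_column hA hν
  set P := NormedSpace.exp A with hP
  have hPnn : ∀ i k, 0 ≤ P i k := hA.exp_nonneg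
  have hPsum : ∀ i, ∑ k, P i k ≤ 1 := by
    intro i
    have h := hA.norm_exp_le (τ := 1) zero_le_one
    rw [one_smul] at h
    have h2 := (row_sum_le_norm P i).trans h
    simpa only [abs_of_nonneg (hPnn i _)] using h2
  have hXpos : 0 < ‖X‖ := norm_pos_iff.2 hX0
  refine norm_lt_of_row_sum hXpos fun i => ?_
  by_cases hrow : ∀ k, X i k = 0
  · have : ∀ k, (X * P) i k = 0 := fun k => by simp [Matrix.mul_apply, hrow]
    simpa [this] using hXpos
  push Not at hrow
  obtain ⟨k₀, hk₀⟩ := hrow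
  have hsum0 : ∑ k, X i k = 0 := by
    simpa [Matrix.mulVec, dotProduct] using congrFun hX i
  obtain ⟨δ, hδ, hδP⟩ : ∃ δ : ℝ, 0 < δ ∧ ∀ k, δ ≤ P k j := by
    have : Nonempty (Fin m) := ⟨j⟩
    obtain ⟨k, hk⟩ := Finite.exists_min fun k => P k j
    exact ⟨P k j, hj k, hk⟩
  have hle : ∀ l, |(X * P) i l| ≤ ∑ k, |X i k| * P k l := by
    intro l
    rw [Matrix.mul_apply]
    refine (Finset.abs_sum_le_sum_abs _ _).trans (le_of_eq ?_)
    exact Finset.sum_congr rfl fun k _ => by rw [abs_mul, abs_of_nonneg (hPnn k l)]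
  -- in the positive column `j`, subtracting `δ` changes nothing because the row sums to zero
  have hlt : |(X * P) i j| < ∑ k, |X i k| * P k j := by
    have h1 : (X * P) i j = ∑ k, X i k * (P k j - δ) := by
      simp only [mul_sub, Finset.sum_sub_distrib, ← Finset.sum_mul, hsum0, zero_mul, sub_zero,
        Matrix.mul_apply]
    rw [h1]
    refine (Finset.abs_sum_le_sum_abs _ _).trans_lt ?_
    refine Finset.sum_lt_sum (fun k _ => ?_) ⟨k₀, Finset.mem_univ _, ?_⟩
    · rw [abs_mul, abs_of_nonneg (sub_nonneg.2 (hδP k))]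
      gcongr
      linarith
    · rw [abs_mul, abs_of_nonneg (sub_nonneg.2 (hδP k₀))]
      have := abs_pos.2 hk₀
      gcongr
      linarith
  calc ∑ l, |(X * P) i l| < ∑ l, ∑ k, |X i k| * P k l :=
        Finset.sum_lt_sum (fun l _ => hle l) ⟨j, Finset.mem_univ _, hlt⟩
    _ = ∑ k, |X i k| * ∑ l, P k l := by
        rw [Finset.sum_comm]
        simp only [Finset.mul_sum]
    _ ≤ ∑ k, |X i k| * 1 := by
        gcongr with k
        exact hPsum k
    _ ≤ ‖X‖ := by simpa using row_sum_le_norm X i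
end Generator

/-! ### Uniform exponential decay -/

section Decay
open scoped Matrix.Norms.Operator
variable {m : ℕ}

theorem exp_add_smul (A : Matrix (Fin m) (Fin m) ℝ) (u v : ℝ) :
    NormedSpace.exp ((u + v) • A) = NormedSpace.exp (u • A) * NormedSpace.exp (v • A) := by
  rw [add_smul, Matrix.exp_add_of_commute]
  exact ((Commute.refl A).smul_left u).smul_right v

/-- The strict contraction is uniform in `t`, by compactness of `[0, T]` times the unit sphere of the
matrices with zero row sums. -/
theorem exists_uniform_contraction {T : ℝ} {A : ℝ → Matrix (Fin m) (Fin m) ℝ} {ν : ℝ → Fin m → ℝ}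
    (hgenA : ∀ t ∈ Set.Icc (0:ℝ) T, IsGenerator (A t))
    (hqs : ∀ t ∈ Set.Icc (0:ℝ) T, IsQuasiStationary (A t) (ν t))
    (hAc : ContinuousOn A (Set.Icc (0:ℝ) T)) :
    ∃ c : ℝ, 0 < c ∧ c < 1 ∧ ∀ t ∈ Set.Icc (0:ℝ) T, ∀ X : Matrix (Fin m) (Fin m) ℝ,
      X *ᵥ 1 = 0 → ‖X * NormedSpace.exp (A t)‖ ≤ c * ‖X‖ := by
  let Z : Set (Matrix (Fin m) (Fin m) ℝ) := Metric.sphere 0 1 ∩ {X | X *ᵥ (1 : Fin m → ℝ) = 0}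
  have hZ : IsCompact Z :=
    (isCompact_sphere _ _).inter_right (isClosed_eq (by fun_prop) continuous_const)
  have hK : IsCompact (Set.Icc (0:ℝ) T ×ˢ Z) := isCompact_Icc.prod hZ
  have hf : ContinuousOn (fun p : ℝ × Matrix (Fin m) (Fin m) ℝ => ‖p.2 * NormedSpace.exp (A p.1)‖)
      (Set.Icc (0:ℝ) T ×ˢ Z) := by
    have hexp : Continuous (NormedSpace.exp : Matrix (Fin m) (Fin m) ℝ → _) := by
      let _ : NormedAlgebra ℚ (Matrix (Fin m) (Fin m) ℝ) := NormedAlgebra.restrictScalars ℚ ℝ _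
      exact NormedSpace.exp_continuous
    have h1 : ContinuousOn (fun p : ℝ × Matrix (Fin m) (Fin m) ℝ => A p.1)
        (Set.Icc (0:ℝ) T ×ˢ Z) := hAc.comp continuousOn_fst fun p hp => hp.1
    exact (continuousOn_snd.mul (hexp.comp_continuousOn h1)).norm
  have hbd : ∃ c : ℝ, 0 < c ∧ c < 1 ∧ ∀ p ∈ Set.Icc (0:ℝ) T ×ˢ Z,
      ‖p.2 * NormedSpace.exp (A p.1)‖ ≤ c := by
    rcases (Set.Icc (0:ℝ) T ×ˢ Z).eq_empty_or_nonempty with h | h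
    · exact ⟨1 / 2, by norm_num, by norm_num, by simp [h]⟩
    · obtain ⟨p, hp, hmax⟩ := hK.exists_isMaxOn h hf
      have hp1 : ‖p.2‖ = 1 := by simpa using hp.2.1
      have hlt : ‖p.2 * NormedSpace.exp (A p.1)‖ < 1 := by
        rw [← hp1]
        refine norm_mul_exp_lt (hgenA _ hp.1) (hqs _ hp.1) hp.2.2 ?_
        intro h0
        simp [h0] at hp1
      refine ⟨max (1 / 2) ‖p.2 * NormedSpace.exp (A p.1)‖, by positivity,
        max_lt (by norm_num) hlt, fun q hq => (hmax hq).trans (le_max_right _ _)⟩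
  obtain ⟨c, hc0, hc1, hc⟩ := hbd
  refine ⟨c, hc0, hc1, fun t ht X hX => ?_⟩
  by_cases hX0 : X = 0
  · simp [hX0]
  have hn : 0 < ‖X‖ := norm_pos_iff.2 hX0
  have := hc (t, ‖X‖⁻¹ • X) ⟨ht, by simp [norm_smul, hn.ne'], by simp [Matrix.smul_mulVec, hX]⟩
  simp only [smul_mul_assoc, norm_smul, norm_inv, norm_norm] at this
  rwa [inv_mul_le_iff₀ hn, mul_comm] at this

/-- Iterating the uniform contraction over unit time steps gives exponential decay with constants
independent of `t`. -/
theorem exists_uniform_decay {T : ℝ} {A : ℝ → Matrix (Fin m) (Fin m) ℝ} {ν : ℝ → Fin m → ℝ}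
    (hgenA : ∀ t ∈ Set.Icc (0:ℝ) T, IsGenerator (A t))
    (hqs : ∀ t ∈ Set.Icc (0:ℝ) T, IsQuasiStationary (A t) (ν t))
    (hAc : ContinuousOn A (Set.Icc (0:ℝ) T)) :
    ∃ C κ : ℝ, 0 < C ∧ 0 < κ ∧ ∀ t ∈ Set.Icc (0:ℝ) T, ∀ X : Matrix (Fin m) (Fin m) ℝ,
      X *ᵥ 1 = 0 → ∀ τ : ℝ, 0 ≤ τ →
        ‖X * NormedSpace.exp (τ • A t)‖ ≤ C * Real.exp (-κ * τ) * ‖X‖ := by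
  obtain ⟨c, hc0, hc1, hc⟩ := exists_uniform_contraction hgenA hqs hAc
  refine ⟨c⁻¹, -Real.log c, by positivity, neg_pos.2 (Real.log_neg hc0 hc1), ?_⟩
  intro t ht X hX τ hτ
  have hpow : ∀ k : ℕ, ‖X * NormedSpace.exp ((k : ℝ) • A t)‖ ≤ c ^ k * ‖X‖ := by
    intro k
    induction k with
    | zero => simp
    | succ k ih =>
      push_cast
      rw [exp_add_smul, one_smul, ← mul_assoc]
      refine (hc t ht _ ?_).trans ?_
      · rw [← Matrix.mulVec_mulVec, exp_mulVec_one, hX]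
        rw [Matrix.smul_mulVec, (hgenA t ht).mulVec_one, smul_zero]
      · rw [pow_succ', mul_assoc]
        gcongr
  have hfl : (⌊τ⌋₊ : ℝ) ≤ τ := Nat.floor_le hτ
  have hfl2 : τ < ⌊τ⌋₊ + 1 := Nat.lt_floor_add_one τ
  have hsplit : NormedSpace.exp (τ • A t) = NormedSpace.exp ((⌊τ⌋₊ : ℝ) • A t)
      * NormedSpace.exp ((τ - ⌊τ⌋₊) • A t) := by
    rw [← exp_add_smul]
    congr 2
    ring
  rw [hsplit, ← mul_assoc]
  calc ‖X * NormedSpace.exp ((⌊τ⌋₊ : ℝ) • A t) * NormedSpace.exp ((τ - ⌊τ⌋₊) • A t)‖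
      ≤ ‖X * NormedSpace.exp ((⌊τ⌋₊ : ℝ) • A t)‖ * ‖NormedSpace.exp ((τ - ⌊τ⌋₊) • A t)‖ :=
        norm_mul_le _ _
    _ ≤ (c ^ ⌊τ⌋₊ * ‖X‖) * 1 := by
        gcongr
        · exact hpow _
        · exact (hgenA t ht).norm_exp_le (sub_nonneg.2 hfl)
    _ ≤ c⁻¹ * Real.exp (-(-Real.log c) * τ) * ‖X‖ := by
        rw [mul_one]
        gcongr
        rw [neg_neg, ← Real.rpow_def_of_pos hc0, ← Real.rpow_natCast, ← Real.rpow_neg_one,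
          ← Real.rpow_add hc0]
        exact Real.rpow_le_rpow_of_exponent_ge hc0 hc1.le (by linarith)

theorem exists_pow_mul_exp_le (p : ℕ) {κ : ℝ} (hκ : 0 < κ) :
    ∃ C : ℝ, 0 < C ∧ ∀ τ : ℝ, 0 ≤ τ →
      τ ^ p * Real.exp (-κ * τ) ≤ C * Real.exp (-(κ / 2) * τ) := by
  refine ⟨p.factorial * (2 / κ) ^ p, by positivity, fun τ hτ => ?_⟩
  have h := Real.pow_div_factorial_le_exp (κ / 2 * τ) (by positivity) p
  rw [div_le_iff₀ (by positivity), mul_pow] at h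
  have h1 : τ ^ p ≤ p.factorial * (2 / κ) ^ p * Real.exp (κ / 2 * τ) := by
    calc τ ^ p = (2 / κ) ^ p * ((κ / 2) ^ p * τ ^ p) := by
          rw [← mul_assoc, ← mul_pow, div_mul_div_comm, mul_comm 2 κ, div_self (by positivity),
            one_pow, one_mul]
      _ ≤ (2 / κ) ^ p * (Real.exp (κ / 2 * τ) * p.factorial) := by gcongr
      _ = _ := by ring
  calc τ ^ p * Real.exp (-κ * τ)
      ≤ (p.factorial * (2 / κ) ^ p * Real.exp (κ / 2 * τ)) * Real.exp (-κ * τ) := by gcongr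
    _ = p.factorial * (2 / κ) ^ p * Real.exp (-(κ / 2) * τ) := by
        rw [mul_assoc, ← Real.exp_add]
        congr 2
        ring
end Decay

/-! ### The outer terms -/

section Outer
variable {m : ℕ}

/-- The all-ones matrix `𝟙𝟙ᵀ`. -/
def onesM (m : ℕ) : Matrix (Fin m) (Fin m) ℝ := Matrix.of fun _ _ => 1

theorem onesM_mulVec_one : onesM m *ᵥ 1 = (m : ℝ) • (1 : Fin m → ℝ) := by
  ext i
  simp [onesM, Matrix.mulVec, dotProduct]

theorem vecMul_onesM (v : Fin m → ℝ) : v ᵥ* onesM m = (∑ i, v i) • (1 : Fin m → ℝ) := by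
  ext i
  simp [onesM, Matrix.vecMul, dotProduct]

/-- Weak irreducibility makes `A + 𝟙𝟙ᵀ` invertible. Its inverse solves the singular equations
`Y A = F`, `Y 𝟙 = 0` smoothly in `t`. -/
theorem isUnit_det_add_ones (hm : 1 ≤ m) {A : Matrix (Fin m) (Fin m) ℝ} {ν : Fin m → ℝ}
    (hA : IsGenerator A) (hν : IsQuasiStationary A ν) : IsUnit (A + onesM m).det := by
  rw [isUnit_iff_ne_zero]
  intro hdet
  obtain ⟨v, hv0, hv⟩ := Matrix.exists_vecMul_eq_zero_iff.2 hdet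
  have hsum : ∑ i, v i = 0 := by
    have h1 : v ⬝ᵥ ((A + onesM m) *ᵥ 1) = 0 := by
      rw [Matrix.dotProduct_mulVec, hv, zero_dotProduct]
    rw [Matrix.add_mulVec, hA.mulVec_one, zero_add, onesM_mulVec_one, dotProduct_smul,
      dotProduct_one, smul_eq_mul] at h1
    rcases mul_eq_zero.1 h1 with h | h
    · have : m = 0 := by exact_mod_cast h
      omega
    · exact h
  rw [Matrix.vecMul_add, vecMul_onesM, hsum, zero_smul, add_zero] at hv
  have := hν.2.2.2 (ν + v) (by rw [Matrix.add_vecMul, hν.1, hv, add_zero])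
    (by simp [Finset.sum_add_distrib, hsum, hν.2.1])
  exact hv0 (by simpa using this)

theorem ones_mul_inv (hm : 1 ≤ m) {A : Matrix (Fin m) (Fin m) ℝ} {ν : Fin m → ℝ}
    (hA : IsGenerator A) (hν : IsQuasiStationary A ν) :
    onesM m * (A + onesM m)⁻¹ = oneNu ν := by
  have hu := isUnit_det_add_ones hm hA hν
  have h : oneNu ν * (A + onesM m) = onesM m := by
    ext i j
    have h1 : (oneNu ν * (A + onesM m)) i j = (ν ᵥ* (A + onesM m)) j := rfl
    rw [h1, Matrix.vecMul_add, hν.1, vecMul_onesM, hν.2.1]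
    simp [onesM]
  calc onesM m * (A + onesM m)⁻¹ = oneNu ν * (A + onesM m) * (A + onesM m)⁻¹ := by rw [h]
    _ = oneNu ν := by rw [Matrix.mul_assoc, Matrix.mul_nonsing_inv _ hu, Matrix.mul_one]

/-- If `F 𝟙 = 0` then `Y = F (A + 𝟙𝟙ᵀ)⁻¹` satisfies `Y 𝟙 = 0` and `Y A = F`. -/
theorem mul_inv_facts (hm : 1 ≤ m) {A F : Matrix (Fin m) (Fin m) ℝ} {ν : Fin m → ℝ}
    (hA : IsGenerator A) (hν : IsQuasiStationary A ν) (hF : F *ᵥ 1 = 0) :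
    (F * (A + onesM m)⁻¹) *ᵥ 1 = 0 ∧ F * (A + onesM m)⁻¹ * A = F := by
  have hu := isUnit_det_add_ones hm hA hν
  set Y := F * (A + onesM m)⁻¹ with hY
  have h1 : Y * (A + onesM m) = F := by
    rw [hY, Matrix.mul_assoc, Matrix.nonsing_inv_mul _ hu, Matrix.mul_one]
  have hY1 : Y *ᵥ 1 = 0 := by
    have h2 : (Y * (A + onesM m)) *ᵥ 1 = 0 := by rw [h1, hF]
    rw [← Matrix.mulVec_mulVec, Matrix.add_mulVec, hA.mulVec_one, zero_add, onesM_mulVec_one,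
      Matrix.mulVec_smul] at h2
    refine (smul_eq_zero.1 h2).resolve_left ?_
    exact_mod_cast (by omega : m ≠ 0)
  have hYJ : Y * onesM m = 0 := by
    ext i j
    simpa [onesM, Matrix.mul_apply, Matrix.mulVec, dotProduct] using congrFun hY1 i
  refine ⟨hY1, ?_⟩
  rwa [Matrix.mul_add, hYJ, add_zero] at h1

theorem contDiffOn_det {r : WithTop ℕ∞} {s : Set ℝ} {X : ℝ → Matrix (Fin m) (Fin m) ℝ}
    (hX : ∀ i j, ContDiffOn ℝ r (fun t => X t i j) s) :
    ContDiffOn ℝ r (fun t => (X t).det) s := by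
  simp only [Matrix.det_apply']
  exact ContDiffOn.sum fun σ _ => contDiffOn_const.mul (contDiffOn_prod fun i _ => hX _ _)

theorem contDiffOn_matrix_inv {r : WithTop ℕ∞} {s : Set ℝ} {X : ℝ → Matrix (Fin m) (Fin m) ℝ}
    (hX : ∀ i j, ContDiffOn ℝ r (fun t => X t i j) s) (hdet : ∀ t ∈ s, (X t).det ≠ 0)
    (i j : Fin m) : ContDiffOn ℝ r (fun t => (X t)⁻¹ i j) s := by
  have h : ∀ t, (X t)⁻¹ i j = ((X t).det)⁻¹ * ((X t).updateRow j (Pi.single i 1)).det := by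
    intro t
    rw [Matrix.inv_def, Ring.inverse_eq_inv', Matrix.smul_apply, Matrix.adjugate_apply,
      smul_eq_mul]
  simp only [h]
  refine ((contDiffOn_det hX).inv hdet).mul (contDiffOn_det fun k l => ?_)
  by_cases hk : k = j
  · subst hk
    simpa using contDiffOn_const
  · simpa [Matrix.updateRow_ne hk] using hX k l

theorem contDiffOn_mul_entries {r : WithTop ℕ∞} {s : Set ℝ} {X Y : ℝ → Matrix (Fin m) (Fin m) ℝ}
    (hX : ∀ i j, ContDiffOn ℝ r (fun t => X t i j) s)
    (hY : ∀ i j, ContDiffOn ℝ r (fun t => Y t i j) s) (i j : Fin m) :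
    ContDiffOn ℝ r (fun t => (X t * Y t) i j) s := by
  simp only [Matrix.mul_apply]
  exact ContDiffOn.sum fun k _ => (hX i k).mul (hY k j)

/-- Entrywise derivative of a matrix function, relative to `[0, T]`. -/
noncomputable def dmat (T : ℝ) (X : ℝ → Matrix (Fin m) (Fin m) ℝ) (t : ℝ) :
    Matrix (Fin m) (Fin m) ℝ :=
  Matrix.of fun i j => derivWithin (fun u => X u i j) (Set.Icc (0:ℝ) T) t

/-- The outer terms `Φ_k`: `Φ_0 = 𝟙𝟙ᵀ (A + 𝟙𝟙ᵀ)⁻¹`, which is `𝟙ν`, and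
`Φ_{k+1} = (Φ_k' - Φ_k B) (A + 𝟙𝟙ᵀ)⁻¹`, the solution of `Φ_{k+1} A = Φ_k' - Φ_k B` with zero row
sums. -/
noncomputable def outer (T : ℝ) (A B : ℝ → Matrix (Fin m) (Fin m) ℝ) :
    ℕ → ℝ → Matrix (Fin m) (Fin m) ℝ
  | 0 => fun t => onesM m * (A t + onesM m)⁻¹
  | k + 1 => fun t => (dmat T (outer T A B k) t - outer T A B k t * B t) * (A t + onesM m)⁻¹

variable {T : ℝ} {n : ℕ} {A B : ℝ → Matrix (Fin m) (Fin m) ℝ} {ν : ℝ → Fin m → ℝ}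

theorem outer_contDiffOn (hm : 1 ≤ m) (hT : 0 < T)
    (hgenA : ∀ t ∈ Set.Icc (0:ℝ) T, IsGenerator (A t))
    (hqs : ∀ t ∈ Set.Icc (0:ℝ) T, IsQuasiStationary (A t) (ν t))
    (hA : ∀ i j, ContDiffOn ℝ ((n + 2 : ℕ) : ℕ∞) (fun t => A t i j) (Set.Icc (0:ℝ) T))
    (hB : ∀ i j, ContDiffOn ℝ ((n + 1 : ℕ) : ℕ∞) (fun t => B t i j) (Set.Icc (0:ℝ) T))
    (k : ℕ) (hk : k ≤ n + 2) (i j : Fin m) :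
    ContDiffOn ℝ ((n + 2 - k : ℕ) : ℕ∞) (fun t => outer T A B k t i j) (Set.Icc (0:ℝ) T) := by
  have hN : ∀ i j, ContDiffOn ℝ ((n + 2 : ℕ) : ℕ∞) (fun t => (A t + onesM m)⁻¹ i j)
      (Set.Icc (0:ℝ) T) :=
    contDiffOn_matrix_inv (fun i j => (hA i j).add contDiffOn_const)
      fun t ht => (isUnit_det_add_ones hm (hgenA t ht) (hqs t ht)).ne_zero
  induction k generalizing i j with
  | zero => exact contDiffOn_mul_entries (fun _ _ => contDiffOn_const) hN i j
  | succ k ih =>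
    have hk' : k ≤ n + 2 := by omega
    have ih' := fun i j => ih hk' i j
    have hle : ((n + 2 - (k + 1) : ℕ) : ℕ∞) ≤ ((n + 2 - k : ℕ) : ℕ∞) := by
      exact_mod_cast (by omega : n + 2 - (k + 1) ≤ n + 2 - k)
    have hle1 : ((n + 2 - (k + 1) : ℕ) : ℕ∞) ≤ ((n + 1 : ℕ) : ℕ∞) := by
      exact_mod_cast (by omega : n + 2 - (k + 1) ≤ n + 1)
    have hle2 : ((n + 2 - (k + 1) : ℕ) : ℕ∞) ≤ ((n + 2 : ℕ) : ℕ∞) := by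
      exact_mod_cast (by omega : n + 2 - (k + 1) ≤ n + 2)
    refine contDiffOn_mul_entries
      (X := fun t => dmat T (outer T A B k) t - outer T A B k t * B t)
      (fun i j => ?_) (fun i j => (hN i j).of_le (by exact_mod_cast hle2)) i j
    refine ContDiffOn.sub ?_ (contDiffOn_mul_entries
      (fun i j => (ih' i j).of_le (by exact_mod_cast hle))
      (fun i j => (hB i j).of_le (by exact_mod_cast hle1)) i j)
    refine (ih' i j).derivWithin (uniqueDiffOn_Icc hT) ?_
    exact_mod_cast (by omega : n + 2 - (k + 1) + 1 ≤ n + 2 - k)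

theorem outer_zero (hm : 1 ≤ m)
    (hgenA : ∀ t ∈ Set.Icc (0:ℝ) T, IsGenerator (A t))
    (hqs : ∀ t ∈ Set.Icc (0:ℝ) T, IsQuasiStationary (A t) (ν t)) :
    ∀ t ∈ Set.Icc (0:ℝ) T, outer T A B 0 t = oneNu (ν t) :=
  fun t ht => ones_mul_inv hm (hgenA t ht) (hqs t ht)

theorem dmat_mulVec_one {X : ℝ → Matrix (Fin m) (Fin m) ℝ} {c : ℝ}
    (hX : ∀ i j, DifferentiableOn ℝ (fun t => X t i j) (Set.Icc (0:ℝ) T))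
    (hc : ∀ t ∈ Set.Icc (0:ℝ) T, X t *ᵥ 1 = c • 1) :
    ∀ t ∈ Set.Icc (0:ℝ) T, dmat T X t *ᵥ 1 = 0 := by
  intro t ht
  ext i
  have h1 : (dmat T X t *ᵥ 1) i
      = derivWithin (fun u => ∑ j, X u i j) (Set.Icc (0:ℝ) T) t := by
    rw [derivWithin_fun_sum fun j _ => hX i j t ht]
    simp [dmat, Matrix.mulVec, dotProduct]
  have h2 : ∀ u ∈ Set.Icc (0:ℝ) T, ∑ j, X u i j = c := fun u hu => by
    simpa [Matrix.mulVec, dotProduct] using congrFun (hc u hu) i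
  rw [h1, derivWithin_congr (f := fun _ => c) h2 (h2 t ht)]
  simp

theorem outer_mulVec_one (hm : 1 ≤ m) (hT : 0 < T)
    (hgenA : ∀ t ∈ Set.Icc (0:ℝ) T, IsGenerator (A t))
    (hgenB : ∀ t ∈ Set.Icc (0:ℝ) T, IsGenerator (B t))
    (hqs : ∀ t ∈ Set.Icc (0:ℝ) T, IsQuasiStationary (A t) (ν t))
    (hA : ∀ i j, ContDiffOn ℝ ((n + 2 : ℕ) : ℕ∞) (fun t => A t i j) (Set.Icc (0:ℝ) T))
    (hB : ∀ i j, ContDiffOn ℝ ((n + 1 : ℕ) : ℕ∞) (fun t => B t i j) (Set.Icc (0:ℝ) T))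
    (k : ℕ) (hk : k ≤ n + 2) :
    ∀ t ∈ Set.Icc (0:ℝ) T, outer T A B k t *ᵥ 1 = (if k = 0 then (1:ℝ) else 0) • 1 := by
  induction k with
  | zero =>
    intro t ht
    rw [outer_zero hm hgenA hqs t ht]
    ext i
    simpa [oneNu, Matrix.mulVec, dotProduct] using (hqs t ht).2.1
  | succ k ih =>
    intro t ht
    have hF : (dmat T (outer T A B k) t - outer T A B k t * B t) *ᵥ 1 = 0 := by
      rw [Matrix.sub_mulVec, ← Matrix.mulVec_mulVec, (hgenB t ht).mulVec_one,
        Matrix.mulVec_zero, sub_zero]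
      refine dmat_mulVec_one (fun i j => ?_) (ih (by omega)) t ht
      refine (outer_contDiffOn hm hT hgenA hqs hA hB k (by omega) i j).differentiableOn ?_
      exact_mod_cast (by omega : n + 2 - k ≠ 0)
    rw [if_neg (Nat.succ_ne_zero k), zero_smul]
    exact (mul_inv_facts hm (hgenA t ht) (hqs t ht) hF).1

theorem outer_mul_A (hm : 1 ≤ m) (hT : 0 < T)
    (hgenA : ∀ t ∈ Set.Icc (0:ℝ) T, IsGenerator (A t))
    (hgenB : ∀ t ∈ Set.Icc (0:ℝ) T, IsGenerator (B t))
    (hqs : ∀ t ∈ Set.Icc (0:ℝ) T, IsQuasiStationary (A t) (ν t))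
    (hA : ∀ i j, ContDiffOn ℝ ((n + 2 : ℕ) : ℕ∞) (fun t => A t i j) (Set.Icc (0:ℝ) T))
    (hB : ∀ i j, ContDiffOn ℝ ((n + 1 : ℕ) : ℕ∞) (fun t => B t i j) (Set.Icc (0:ℝ) T))
    (k : ℕ) (hk : k + 1 ≤ n + 2) :
    ∀ t ∈ Set.Icc (0:ℝ) T, outer T A B (k + 1) t * A t
      = dmat T (outer T A B k) t - outer T A B k t * B t := by
  intro t ht
  refine (mul_inv_facts hm (hgenA t ht) (hqs t ht) ?_).2
  rw [Matrix.sub_mulVec, ← Matrix.mulVec_mulVec, (hgenB t ht).mulVec_one,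
    Matrix.mulVec_zero, sub_zero]
  refine dmat_mulVec_one (fun i j => ?_)
    (outer_mulVec_one hm hT hgenA hgenB hqs hA hB k (by omega)) t ht
  refine (outer_contDiffOn hm hT hgenA hqs hA hB k (by omega) i j).differentiableOn ?_
  exact_mod_cast (by omega : n + 2 - k ≠ 0)

theorem outer_zero_mul_A (hm : 1 ≤ m)
    (hgenA : ∀ t ∈ Set.Icc (0:ℝ) T, IsGenerator (A t))
    (hqs : ∀ t ∈ Set.Icc (0:ℝ) T, IsQuasiStationary (A t) (ν t)) :
    ∀ t ∈ Set.Icc (0:ℝ) T, outer T A B 0 t * A t = 0 := by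
  intro t ht
  rw [outer_zero hm hgenA hqs t ht]
  ext i j
  exact congrFun (hqs t ht).1 j
end Outer

/-! ### The initial-layer terms -/

section Inner
open scoped Matrix.Norms.Operator
variable {m : ℕ}

theorem exists_bound_sum {ι α E : Type*} [SeminormedAddCommGroup E] (s : Finset ι) (f : ι → α → E)
    (g : α → ℝ) (S : Set α) (hg : ∀ a ∈ S, 0 ≤ g a)
    (h : ∀ i ∈ s, ∃ D : ℝ, ∀ a ∈ S, ‖f i a‖ ≤ D * g a) :
    ∃ D : ℝ, 0 < D ∧ ∀ a ∈ S, ‖∑ i ∈ s, f i a‖ ≤ D * g a := by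
  choose! D hD using h
  refine ⟨1 + ∑ i ∈ s, |D i|, by positivity, fun a ha => ?_⟩
  have h0 := hg a ha
  calc ‖∑ i ∈ s, f i a‖ ≤ ∑ i ∈ s, ‖f i a‖ := norm_sum_le _ _
    _ ≤ ∑ i ∈ s, |D i| * g a := Finset.sum_le_sum fun i hi =>
        (hD i hi a ha).trans (by gcongr; exact le_abs_self _)
    _ = (∑ i ∈ s, |D i|) * g a := by rw [Finset.sum_mul]
    _ ≤ (1 + ∑ i ∈ s, |D i|) * g a := by gcongr; linarith

/-- Recursive solution of the layer hierarchy `∂_τ Ψ_k = Ψ_k A(t₀) + ∑_{l<k} Ψ_{k-l-1} W_l`, for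
coefficients `W_l` with zero row sums and polynomial growth in `τ`. The initial values and forcing terms
have zero row sums, so the uniform decay of `exp (τ A(t₀))` makes them decay exponentially;
the rate is halved to absorb polynomial factors whenever `k` increases. -/
theorem exists_inner {T : ℝ} {A : ℝ → Matrix (Fin m) (Fin m) ℝ}
    (W : ℕ → ℝ → ℝ → Matrix (Fin m) (Fin m) ℝ) (x₀ : ℕ → ℝ → Matrix (Fin m) (Fin m) ℝ)
    (hdecay : ∃ C κ : ℝ, 0 < C ∧ 0 < κ ∧ ∀ t ∈ Set.Icc (0:ℝ) T, ∀ X : Matrix (Fin m) (Fin m) ℝ,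
      X *ᵥ 1 = 0 → ∀ τ : ℝ, 0 ≤ τ →
        ‖X * NormedSpace.exp (τ • A t)‖ ≤ C * Real.exp (-κ * τ) * ‖X‖)
    (N : ℕ)
    (hWc : ∀ l, l + 1 < N → ∀ t₀ ∈ Set.Icc (0:ℝ) T, Continuous (W l t₀))
    (hW1 : ∀ l, l + 1 < N → ∀ t₀ ∈ Set.Icc (0:ℝ) T, ∀ τ, W l t₀ τ *ᵥ 1 = 0)
    (hWb : ∀ l, l + 1 < N → ∃ C : ℝ, 0 < C ∧ ∀ t₀ ∈ Set.Icc (0:ℝ) T, ∀ τ : ℝ, 0 ≤ τ →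
      ‖W l t₀ τ‖ ≤ C * (τ ^ (l + 1) + τ ^ l))
    (hx1 : ∀ k < N, ∀ t₀ ∈ Set.Icc (0:ℝ) T, x₀ k t₀ *ᵥ 1 = 0)
    (hxb : ∀ k < N, ∃ C : ℝ, ∀ t₀ ∈ Set.Icc (0:ℝ) T, ‖x₀ k t₀‖ ≤ C) :
    ∃ (Ψ : ℕ → ℝ → ℝ → Matrix (Fin m) (Fin m) ℝ) (K κ : ℝ), 0 < K ∧ 0 < κ ∧
      ∀ k < N, ∀ t₀ ∈ Set.Icc (0:ℝ) T, Ψ k t₀ 0 = x₀ k t₀ ∧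
        (∀ τ, HasDerivAt (Ψ k t₀)
          (Ψ k t₀ τ * A t₀ + ∑ l ∈ Finset.range k, Ψ (k - l - 1) t₀ τ * W l t₀ τ) τ) ∧
        ∀ τ, 0 ≤ τ → ‖Ψ k t₀ τ‖ ≤ K * Real.exp (-κ * τ) := by
  induction N with
  | zero => exact ⟨fun _ _ _ => 0, 1, 1, one_pos, one_pos, by simp⟩
  | succ N ih =>
    obtain ⟨Ψ, K, κ, hK, hκ, hΨ⟩ := ih (fun l hl => hWc l (by omega)) (fun l hl => hW1 l (by omega))
      (fun l hl => hWb l (by omega)) (fun k hk => hx1 k (by omega)) (fun k hk => hxb k (by omega))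
    obtain ⟨C, κd, hC, hκd, hdec⟩ := hdecay
    obtain ⟨Cx, hCx⟩ := hxb N (by omega)
    let R : ℝ → ℝ → Matrix (Fin m) (Fin m) ℝ :=
      fun t₀ τ => ∑ l ∈ Finset.range N, Ψ (N - l - 1) t₀ τ * W l t₀ τ
    have hRc : ∀ t₀ ∈ Set.Icc (0:ℝ) T, Continuous (R t₀) := by
      intro t₀ ht₀
      refine continuous_finsetSum _ fun l hl => ?_
      have hl' := Finset.mem_range.1 hl
      refine Continuous.mul ?_ (hWc l (by omega) t₀ ht₀)
      exact continuous_iff_continuousAt.2 fun τ =>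
        ((hΨ (N - l - 1) (by omega) t₀ ht₀).2.1 τ).continuousAt
    have hR1 : ∀ t₀ ∈ Set.Icc (0:ℝ) T, ∀ τ, R t₀ τ *ᵥ 1 = 0 := by
      intro t₀ ht₀ τ
      simp only [R]
      rw [Matrix.sum_mulVec]
      refine Finset.sum_eq_zero fun l hl => ?_
      have hl' := Finset.mem_range.1 hl
      rw [← Matrix.mulVec_mulVec, hW1 l (by omega) t₀ ht₀, Matrix.mulVec_zero]
    obtain ⟨D, hD, hRb⟩ : ∃ D : ℝ, 0 < D ∧ ∀ p ∈ {p : ℝ × ℝ | p.1 ∈ Set.Icc (0:ℝ) T ∧ 0 ≤ p.2},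
        ‖R p.1 p.2‖ ≤ D * Real.exp (-(κ / 2) * p.2) := by
      refine exists_bound_sum _ (fun l (p : ℝ × ℝ) => Ψ (N - l - 1) p.1 p.2 * W l p.1 p.2)
        (fun p => Real.exp (-(κ / 2) * p.2)) _ (fun p _ => (Real.exp_pos _).le) fun l hl => ?_
      have hl' := Finset.mem_range.1 hl
      obtain ⟨CW, hCW, hWl⟩ := hWb l (by omega)
      obtain ⟨C1, hC1, h1⟩ := exists_pow_mul_exp_le (l + 1) hκ
      obtain ⟨C2, hC2, h2⟩ := exists_pow_mul_exp_le l hκ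
      refine ⟨K * CW * (C1 + C2), fun p hp => ?_⟩
      have e1 := h1 p.2 hp.2
      have e2 := h2 p.2 hp.2
      have e3 := (hΨ (N - l - 1) (by omega) p.1 hp.1).2.2 p.2 hp.2
      have e4 := hWl p.1 hp.1 p.2 hp.2
      calc ‖Ψ (N - l - 1) p.1 p.2 * W l p.1 p.2‖
          ≤ ‖Ψ (N - l - 1) p.1 p.2‖ * ‖W l p.1 p.2‖ := norm_mul_le _ _
        _ ≤ (K * Real.exp (-κ * p.2)) * (CW * (p.2 ^ (l + 1) + p.2 ^ l)) := by gcongr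
        _ = K * CW * (p.2 ^ (l + 1) * Real.exp (-κ * p.2) + p.2 ^ l * Real.exp (-κ * p.2)) := by
            ring
        _ ≤ K * CW * (C1 * Real.exp (-(κ / 2) * p.2) + C2 * Real.exp (-(κ / 2) * p.2)) := by
            gcongr
        _ = _ := by ring
    have hsol : ∀ t₀, ∃ ψ : ℝ → Matrix (Fin m) (Fin m) ℝ, t₀ ∈ Set.Icc (0:ℝ) T →
        ψ 0 = x₀ N t₀ ∧ (∀ τ, HasDerivAt ψ (ψ τ * A t₀ + R t₀ τ) τ) ∧
        ∀ τ, 0 ≤ τ → ∀ M, (∀ s ∈ Set.Icc 0 τ,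
          ‖R t₀ s * NormedSpace.exp ((τ - s) • A t₀)‖ ≤ M) →
          ‖ψ τ‖ ≤ ‖x₀ N t₀ * NormedSpace.exp (τ • A t₀)‖ + M * τ := by
      intro t₀
      by_cases ht₀ : t₀ ∈ Set.Icc (0:ℝ) T
      · obtain ⟨ψ, hψ⟩ := exists_linear_ode (A t₀) (x₀ N t₀) (R t₀) (hRc t₀ ht₀)
        exact ⟨ψ, fun _ => hψ⟩
      · exact ⟨0, fun h => absurd h ht₀⟩
    choose ψ hψ using hsol
    set μ := min (κ / 2) κd with hμ
    have hμ0 : 0 < μ := lt_min (by positivity) hκd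
    obtain ⟨C1, hC1, hpoly⟩ := exists_pow_mul_exp_le 1 hμ0
    have hψb : ∀ t₀ ∈ Set.Icc (0:ℝ) T, ∀ τ, 0 ≤ τ →
        ‖ψ t₀ τ‖ ≤ (C * |Cx| + C * D * C1) * Real.exp (-(μ / 2) * τ) := by
      intro t₀ ht₀ τ hτ
      have h1 := (hψ t₀ ht₀).2.2 τ hτ (C * D * Real.exp (-μ * τ)) (by
        intro s hs
        calc ‖R t₀ s * NormedSpace.exp ((τ - s) • A t₀)‖
            ≤ C * Real.exp (-κd * (τ - s)) * ‖R t₀ s‖ :=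
              hdec t₀ ht₀ _ (hR1 t₀ ht₀ s) _ (sub_nonneg.2 hs.2)
          _ ≤ C * Real.exp (-κd * (τ - s)) * (D * Real.exp (-(κ / 2) * s)) := by
              gcongr
              exact hRb (t₀, s) ⟨ht₀, hs.1⟩
          _ = C * D * Real.exp (-κd * (τ - s) + -(κ / 2) * s) := by
              rw [Real.exp_add]; ring
          _ ≤ C * D * Real.exp (-μ * τ) := by
              gcongr
              have a1 : μ * (τ - s) ≤ κd * (τ - s) :=
                mul_le_mul_of_nonneg_right (min_le_right _ _) (sub_nonneg.2 hs.2)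
              have a2 : μ * s ≤ κ / 2 * s := mul_le_mul_of_nonneg_right (min_le_left _ _) hs.1
              linarith)
      have h2 : ‖x₀ N t₀ * NormedSpace.exp (τ • A t₀)‖
          ≤ C * |Cx| * Real.exp (-(μ / 2) * τ) := by
        calc _ ≤ C * Real.exp (-κd * τ) * ‖x₀ N t₀‖ :=
              hdec t₀ ht₀ _ (hx1 N (by omega) t₀ ht₀) τ hτ
          _ ≤ C * Real.exp (-(μ / 2) * τ) * |Cx| := by
              gcongr
              · have : μ ≤ κd := min_le_right _ _
                linarith
              · exact (hCx t₀ ht₀).trans (le_abs_self _)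
          _ = _ := by ring
      have h3 := hpoly τ hτ
      rw [pow_one] at h3
      calc ‖ψ t₀ τ‖ ≤ _ := h1
        _ ≤ C * |Cx| * Real.exp (-(μ / 2) * τ) + C * D * (τ * Real.exp (-μ * τ)) := by
            linarith
        _ ≤ C * |Cx| * Real.exp (-(μ / 2) * τ) + C * D * (C1 * Real.exp (-(μ / 2) * τ)) := by
            gcongr
        _ = _ := by ring
    refine ⟨Function.update Ψ N ψ, K + (C * |Cx| + C * D * C1), μ / 2, by positivity,
      by positivity, fun k hk t₀ ht₀ => ?_⟩
    have hold : ∀ j, j < N → Function.update Ψ N ψ j = Ψ j := fun j hj =>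
      Function.update_of_ne (by omega) _ _
    have hsum : ∀ τ, ∑ l ∈ Finset.range k, Function.update Ψ N ψ (k - l - 1) t₀ τ * W l t₀ τ
        = ∑ l ∈ Finset.range k, Ψ (k - l - 1) t₀ τ * W l t₀ τ := fun τ =>
      Finset.sum_congr rfl fun l hl => by
        have := Finset.mem_range.1 hl
        rw [hold _ (by omega)]
    simp only [hsum]
    rcases Nat.lt_succ_iff_lt_or_eq.1 hk with hk' | rfl
    · rw [hold k hk']
      obtain ⟨a1, a2, a3⟩ := hΨ k hk' t₀ ht₀
      refine ⟨a1, a2, fun τ hτ => (a3 τ hτ).trans ?_⟩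
      have : μ ≤ κ / 2 := min_le_left _ _
      have h1 : Real.exp (-κ * τ) ≤ Real.exp (-(μ / 2) * τ) := by
        gcongr
        linarith
      calc K * Real.exp (-κ * τ) ≤ K * Real.exp (-(μ / 2) * τ) := by gcongr
        _ ≤ _ := by
          gcongr
          have : 0 ≤ C * |Cx| + C * D * C1 := by positivity
          linarith
    · rw [Function.update_self]
      obtain ⟨a1, a2, -⟩ := hψ t₀ ht₀
      refine ⟨a1, a2, fun τ hτ => (hψb t₀ ht₀ τ hτ).trans ?_⟩
      exact mul_le_mul_of_nonneg_right (by linarith) (Real.exp_pos _).le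
end Inner

/-! ### Taylor coefficients in the layer equations -/

section Coefficients
open scoped Matrix.Norms.Operator
variable {m : ℕ}

theorem norm_le_of_entries {X : Matrix (Fin m) (Fin m) ℝ} {c : ℝ} (hc : 0 ≤ c)
    (h : ∀ i j, |X i j| ≤ c) : ‖X‖ ≤ m * c := by
  refine norm_le_of_row_sum (by positivity) fun i => ?_
  calc ∑ j, |X i j| ≤ ∑ _j : Fin m, c := Finset.sum_le_sum fun j _ => h i j
    _ = m * c := by simp

/-- A bound that holds entrywise with entry-dependent constants holds with one constant. -/
theorem exists_uniform_entries {P : Fin m → Fin m → ℝ → Prop}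
    (hmono : ∀ i j c d, c ≤ d → P i j c → P i j d) (h : ∀ i j, ∃ c, P i j c) :
    ∃ c, 0 < c ∧ ∀ i j, P i j c := by
  choose c hc using h
  refine ⟨1 + ∑ i, ∑ j, |c i j|, by positivity, fun i j => hmono i j _ _ ?_ (hc i j)⟩
  have h1 : |c i j| ≤ ∑ j, |c i j| :=
    Finset.single_le_sum (f := fun j => |c i j|) (fun _ _ => abs_nonneg _) (Finset.mem_univ j)
  have h2 : ∑ j, |c i j| ≤ ∑ i, ∑ j, |c i j| :=
    Finset.single_le_sum (f := fun i => ∑ j, |c i j|)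
      (fun _ _ => Finset.sum_nonneg fun _ _ => abs_nonneg _) (Finset.mem_univ i)
  linarith [le_abs_self (c i j)]

theorem exists_iteratedDerivWithin_bound {T : ℝ} (hT : 0 < T) {f : ℝ → ℝ} {p q : ℕ}
    (hf : ContDiffOn ℝ (p : ℕ∞) f (Set.Icc 0 T)) (hq : q ≤ p) :
    ∃ C, 0 < C ∧ ∀ t ∈ Set.Icc (0:ℝ) T, |iteratedDerivWithin q f (Set.Icc 0 T) t| ≤ C := by
  have hc := hf.continuousOn_iteratedDerivWithin (m := q) (by exact_mod_cast hq)
    (uniqueDiffOn_Icc hT)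
  obtain ⟨C, hC⟩ := isCompact_Icc.exists_bound_of_continuousOn hc
  exact ⟨|C| + 1, by positivity, fun t ht => (hC t ht).trans (by linarith [le_abs_self C])⟩

theorem sum_iteratedDerivWithin_eq_zero {ι : Type*} (s : Finset ι) {T : ℝ} (hT : 0 < T)
    {f : ι → ℝ → ℝ} {p : ℕ} (hf : ∀ i ∈ s, ContDiffOn ℝ (p : ℕ∞) (f i) (Set.Icc 0 T))
    (h0 : ∀ t ∈ Set.Icc (0:ℝ) T, ∑ i ∈ s, f i t = 0) {q : ℕ} (hq : q ≤ p) :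
    ∀ t ∈ Set.Icc (0:ℝ) T, ∑ i ∈ s, iteratedDerivWithin q (f i) (Set.Icc 0 T) t = 0 := by
  induction q with
  | zero => simpa using h0
  | succ q ih =>
    intro t ht
    have ih' := ih (by omega)
    simp only [iteratedDerivWithin_succ]
    have hd : ∀ i ∈ s, DifferentiableWithinAt ℝ (iteratedDerivWithin q (f i) (Set.Icc 0 T))
        (Set.Icc 0 T) t := fun i hi =>
      (hf i hi).differentiableOn_iteratedDerivWithin (by exact_mod_cast hq)
        (uniqueDiffOn_Icc hT) t ht
    rw [← derivWithin_fun_sum hd, derivWithin_congr ih' (ih' t ht)]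
    simp

/-- Taylor's formula on `[t₀, T]`, uniformly in `t₀`, with the derivatives at `t₀` taken within
`[0, T]`. -/
theorem exists_taylor_bound {T : ℝ} (hT : 0 < T) {f : ℝ → ℝ} {p : ℕ}
    (hf : ContDiffOn ℝ (p : ℕ∞) f (Set.Icc 0 T)) :
    ∃ C, 0 < C ∧ ∀ t₀ t, 0 ≤ t₀ → t₀ ≤ t → t ≤ T →
      |f t - ∑ i ∈ Finset.range p, (t - t₀) ^ i / (Nat.factorial i) *
        iteratedDerivWithin i f (Set.Icc 0 T) t₀| ≤ C * (t - t₀) ^ p := by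
  obtain ⟨C, hC, hb⟩ := exists_iteratedDerivWithin_bound hT hf le_rfl
  refine ⟨C, hC, fun t₀ t h0 h1 h2 => ?_⟩
  cases p with
  | zero => simpa using hb t ⟨h0.trans h1, h2⟩
  | succ p =>
    rcases h1.eq_or_lt with rfl | hlt
    · simp [Finset.sum_range_succ']
    have hlT : t₀ < T := hlt.trans_le h2
    have hsub : Set.Icc t₀ T ⊆ Set.Icc 0 T := Set.Icc_subset_Icc_left h0
    have heq : ∀ q ≤ p + 1, ∀ y ∈ Set.Icc t₀ T,
        iteratedDerivWithin q f (Set.Icc t₀ T) y = iteratedDerivWithin q f (Set.Icc 0 T) y := by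
      intro q hq y hy
      rw [iteratedDerivWithin, iteratedDerivWithin, iteratedFDerivWithin_subset hsub
        (uniqueDiffOn_Icc hlT) (uniqueDiffOn_Icc hT) (hf.of_le (by exact_mod_cast hq)) hy]
    have key := taylor_mean_remainder_bound (f := f) (C := C) (n := p) hlT.le
      (by exact_mod_cast hf.mono hsub) (x := t) ⟨h1, h2⟩ (fun y hy => by
        rw [heq _ le_rfl y hy]; exact hb y (hsub hy))
    rw [taylor_within_apply, Real.norm_eq_abs] at key
    have hs : ∑ k ∈ Finset.range (p + 1), ((Nat.factorial k : ℝ)⁻¹ * (t - t₀) ^ k) •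
          iteratedDerivWithin k f (Set.Icc t₀ T) t₀
        = ∑ i ∈ Finset.range (p + 1), (t - t₀) ^ i / (Nat.factorial i) *
        iteratedDerivWithin i f (Set.Icc 0 T) t₀ := by
      refine Finset.sum_congr rfl fun k hk => ?_
      rw [heq k (by have := Finset.mem_range.1 hk; omega) t₀ ⟨le_rfl, hlT.le⟩, smul_eq_mul]
      ring
    rw [hs] at key
    refine key.trans (div_le_self (by have := sub_nonneg.2 h1; positivity) ?_)
    exact_mod_cast Nat.one_le_iff_ne_zero.2 (Nat.factorial_ne_zero p)

/-- The bracket in the layer equations, `(τ^{l+1}/(l+1)!) A^{(l+1)}(t₀) + (τ^l/l!) B^{(l)}(t₀)`. -/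
noncomputable def layerCoeff (T : ℝ) (A B : ℝ → Matrix (Fin m) (Fin m) ℝ) (l : ℕ) (t₀ τ : ℝ) :
    Matrix (Fin m) (Fin m) ℝ :=
  Matrix.of (fun b j =>
        τ ^ (l + 1) / (Nat.factorial (l + 1)) *
          iteratedDerivWithin (l + 1) (fun u => A u b j) (Set.Icc (0:ℝ) T) t₀ +
        τ ^ l / (Nat.factorial l) *
          iteratedDerivWithin l (fun u => B u b j) (Set.Icc (0:ℝ) T) t₀)

variable {T : ℝ} {n : ℕ} {A B : ℝ → Matrix (Fin m) (Fin m) ℝ}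

theorem layerCoeff_continuous (l : ℕ) (t₀ : ℝ) : Continuous (layerCoeff T A B l t₀) := by
  refine continuous_matrix fun i j => ?_
  simp only [layerCoeff, Matrix.of_apply]
  fun_prop

theorem layerCoeff_mulVec_one (hT : 0 < T)
    (hgenA : ∀ t ∈ Set.Icc (0:ℝ) T, IsGenerator (A t))
    (hgenB : ∀ t ∈ Set.Icc (0:ℝ) T, IsGenerator (B t))
    (hA : ∀ i j, ContDiffOn ℝ ((n + 2 : ℕ) : ℕ∞) (fun t => A t i j) (Set.Icc (0:ℝ) T))
    (hB : ∀ i j, ContDiffOn ℝ ((n + 1 : ℕ) : ℕ∞) (fun t => B t i j) (Set.Icc (0:ℝ) T))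
    {l : ℕ} (hl : l ≤ n + 1) {t₀ : ℝ} (ht₀ : t₀ ∈ Set.Icc (0:ℝ) T) (τ : ℝ) :
    layerCoeff T A B l t₀ τ *ᵥ 1 = 0 := by
  ext b
  have h1 := sum_iteratedDerivWithin_eq_zero Finset.univ hT (f := fun j u => A u b j)
    (fun j _ => hA b j) (fun t ht => (hgenA t ht).2 b) (q := l + 1) (by omega) t₀ ht₀
  have h2 := sum_iteratedDerivWithin_eq_zero Finset.univ hT (f := fun j u => B u b j)
    (fun j _ => hB b j) (fun t ht => (hgenB t ht).2 b) (q := l) (by omega) t₀ ht₀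
  simp only [Matrix.mulVec, dotProduct, layerCoeff, Matrix.of_apply, Pi.one_apply, mul_one,
    Finset.sum_add_distrib, ← Finset.mul_sum, h1, h2, mul_zero, add_zero, Pi.zero_apply]

theorem layerCoeff_bound (hT : 0 < T)
    (hA : ∀ i j, ContDiffOn ℝ ((n + 2 : ℕ) : ℕ∞) (fun t => A t i j) (Set.Icc (0:ℝ) T))
    (hB : ∀ i j, ContDiffOn ℝ ((n + 1 : ℕ) : ℕ∞) (fun t => B t i j) (Set.Icc (0:ℝ) T))
    {l : ℕ} (hl : l ≤ n + 1) : ∃ C, 0 < C ∧ ∀ t₀ ∈ Set.Icc (0:ℝ) T, ∀ τ, 0 ≤ τ →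
      ‖layerCoeff T A B l t₀ τ‖ ≤ C * (τ ^ (l + 1) + τ ^ l) := by
  obtain ⟨C, hC, h⟩ := exists_uniform_entries (P := fun i j c => 0 ≤ c ∧ ∀ t₀ ∈ Set.Icc (0:ℝ) T,
      ∀ τ, 0 ≤ τ → |layerCoeff T A B l t₀ τ i j| ≤ c * (τ ^ (l + 1) + τ ^ l))
    (fun i j c d hcd h => ⟨h.1.trans hcd, fun t₀ ht₀ τ hτ => (h.2 t₀ ht₀ τ hτ).trans (by gcongr)⟩)
    (fun i j => by
      obtain ⟨a, ha, h1⟩ := exists_iteratedDerivWithin_bound hT (hA i j) (q := l + 1) (by omega)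
      obtain ⟨b, hb, h2⟩ := exists_iteratedDerivWithin_bound hT (hB i j) (q := l) (by omega)
      refine ⟨a + b, by positivity, fun t₀ ht₀ τ hτ => ?_⟩
      simp only [layerCoeff, Matrix.of_apply]
      have f1 : (1:ℝ) ≤ Nat.factorial (l + 1) := by
        exact_mod_cast Nat.one_le_iff_ne_zero.2 (Nat.factorial_ne_zero _)
      have f2 : (1:ℝ) ≤ Nat.factorial l := by
        exact_mod_cast Nat.one_le_iff_ne_zero.2 (Nat.factorial_ne_zero _)
      have p1 : τ ^ (l + 1) / (Nat.factorial (l + 1)) ≤ τ ^ (l + 1) :=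
        div_le_self (by positivity) f1
      have p2 : τ ^ l / (Nat.factorial l) ≤ τ ^ l := div_le_self (by positivity) f2
      refine (abs_add_le _ _).trans ?_
      rw [abs_mul, abs_mul, abs_of_nonneg (by positivity : (0:ℝ) ≤ τ ^ (l + 1) / (Nat.factorial (l + 1))),
        abs_of_nonneg (by positivity : (0:ℝ) ≤ τ ^ l / (Nat.factorial l))]
      have q1 := mul_le_mul p1 (h1 t₀ ht₀) (abs_nonneg _) (by positivity)
      have q2 := mul_le_mul p2 (h2 t₀ ht₀) (abs_nonneg _) (by positivity)
      have : 0 ≤ τ ^ (l + 1) * b := by positivity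
      have : 0 ≤ τ ^ l * a := by positivity
      nlinarith)
  refine ⟨m * C + 1, by positivity, fun t₀ ht₀ τ hτ => ?_⟩
  have := norm_le_of_entries (X := layerCoeff T A B l t₀ τ) (by positivity)
    fun i j => (h i j).2 t₀ ht₀ τ hτ
  have h0 : 0 ≤ τ ^ (l + 1) + τ ^ l := by positivity
  nlinarith

/-- With `τ = (t - t₀) / ε`, the sum of `ε^{l+1} layerCoeff l` over `l < q` is the Taylor expansion of
`A(t) - A(t₀) + ε B(t)` about `t₀`, to order `q` in `A` and `q - 1` in `B`. -/
theorem layer_taylor_bound (hT : 0 < T)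
    (hA : ∀ i j, ContDiffOn ℝ ((n + 2 : ℕ) : ℕ∞) (fun t => A t i j) (Set.Icc (0:ℝ) T))
    (hB : ∀ i j, ContDiffOn ℝ ((n + 1 : ℕ) : ℕ∞) (fun t => B t i j) (Set.Icc (0:ℝ) T))
    {q : ℕ} (hq : q ≤ n + 1) : ∃ C, 0 < C ∧ ∀ ε, 0 < ε → ∀ t₀ t, 0 ≤ t₀ → t₀ ≤ t → t ≤ T →
      ‖A t - A t₀ + ε • B t - ∑ l ∈ Finset.range q,
        ε ^ (l + 1) • layerCoeff T A B l t₀ ((t - t₀) / ε)‖ ≤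
        C * ε ^ (q + 1) * (((t - t₀) / ε) ^ (q + 1) + ((t - t₀) / ε) ^ q) := by
  obtain ⟨C, hC, h⟩ := exists_uniform_entries (P := fun i j c => 0 ≤ c ∧ ∀ ε, 0 < ε →
      ∀ t₀ t, 0 ≤ t₀ → t₀ ≤ t → t ≤ T →
      |(A t - A t₀ + ε • B t - ∑ l ∈ Finset.range q,
        ε ^ (l + 1) • layerCoeff T A B l t₀ ((t - t₀) / ε)) i j| ≤
        c * (ε ^ (q + 1) * (((t - t₀) / ε) ^ (q + 1) + ((t - t₀) / ε) ^ q)))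
    (fun i j c d hcd h => ⟨h.1.trans hcd, fun ε hε t₀ t h0 h1 h2 =>
      (h.2 ε hε t₀ t h0 h1 h2).trans (by
        have : 0 ≤ t - t₀ := sub_nonneg.2 h1
        gcongr)⟩)
    (fun i j => by
      obtain ⟨a, ha, h1⟩ := exists_taylor_bound hT (p := q + 1)
        ((hA i j).of_le (by exact_mod_cast (by omega : q + 1 ≤ n + 2)))
      obtain ⟨b, hb, h2⟩ := exists_taylor_bound hT (p := q)
        ((hB i j).of_le (by exact_mod_cast (by omega : q ≤ n + 1)))
      refine ⟨a + b, by positivity, fun ε hε t₀ t h0 h01 hT' => ?_⟩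
      have e1 := h1 t₀ t h0 h01 hT'
      have e2 := h2 t₀ t h0 h01 hT'
      set τ := (t - t₀) / ε with hτ
      have hτ0 : 0 ≤ τ := div_nonneg (sub_nonneg.2 h01) hε.le
      have ht : t - t₀ = ε * τ := by rw [hτ]; field_simp
      rw [ht] at e1 e2
      rw [Finset.sum_range_succ'] at e1
      have hval : (A t - A t₀ + ε • B t - ∑ l ∈ Finset.range q,
          ε ^ (l + 1) • layerCoeff T A B l t₀ τ) i j
          = (A t i j - (∑ k ∈ Finset.range q, (ε * τ) ^ (k + 1) / (Nat.factorial (k + 1)) *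
              iteratedDerivWithin (k + 1) (fun u => A u i j) (Set.Icc 0 T) t₀ +
              (ε * τ) ^ 0 / (Nat.factorial 0) *
              iteratedDerivWithin 0 (fun u => A u i j) (Set.Icc 0 T) t₀))
            + ε * (B t i j - ∑ k ∈ Finset.range q, (ε * τ) ^ k / (Nat.factorial k) *
              iteratedDerivWithin k (fun u => B u i j) (Set.Icc 0 T) t₀) := by
        simp only [Matrix.sub_apply, Matrix.add_apply, Matrix.smul_apply, Matrix.sum_apply,
          layerCoeff, Matrix.of_apply, smul_eq_mul, mul_add, mul_sub, Finset.sum_add_distrib,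
          Finset.mul_sum, iteratedDerivWithin_zero, pow_zero, Nat.factorial_zero, Nat.cast_one,
          div_one, one_mul]
        have s1 : ∀ k, (ε * τ) ^ (k + 1) / (Nat.factorial (k + 1) : ℝ) *
              iteratedDerivWithin (k + 1) (fun u => A u i j) (Set.Icc 0 T) t₀
            = ε ^ (k + 1) * (τ ^ (k + 1) / (Nat.factorial (k + 1)) *
              iteratedDerivWithin (k + 1) (fun u => A u i j) (Set.Icc 0 T) t₀) := by
          intro k; rw [mul_pow]; ring
        have s2 : ∀ k, ε * ((ε * τ) ^ k / (Nat.factorial k : ℝ) *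
              iteratedDerivWithin k (fun u => B u i j) (Set.Icc 0 T) t₀)
            = ε ^ (k + 1) * (τ ^ k / (Nat.factorial k) *
              iteratedDerivWithin k (fun u => B u i j) (Set.Icc 0 T) t₀) := by
          intro k; rw [mul_pow]; ring
        simp only [s1, s2]
        ring
      rw [hval]
      refine (abs_add_le _ _).trans ?_
      rw [abs_mul, abs_of_pos hε]
      have e3 := mul_le_mul_of_nonneg_left e2 hε.le
      have r1 : a * (ε * τ) ^ (q + 1) = a * (ε ^ (q + 1) * τ ^ (q + 1)) := by rw [mul_pow]
      have r2 : ε * (b * (ε * τ) ^ q) = b * (ε ^ (q + 1) * τ ^ q) := by rw [mul_pow]; ring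
      have : 0 ≤ b * (ε ^ (q + 1) * τ ^ (q + 1)) := by positivity
      have : 0 ≤ a * (ε ^ (q + 1) * τ ^ q) := by positivity
      nlinarith)
  refine ⟨m * C + 1, by positivity, fun ε hε t₀ t h0 h1 h2 => ?_⟩
  have hτ0 : 0 ≤ (t - t₀) / ε := div_nonneg (sub_nonneg.2 h1) hε.le
  have := norm_le_of_entries (X := A t - A t₀ + ε • B t - ∑ l ∈ Finset.range q,
        ε ^ (l + 1) • layerCoeff T A B l t₀ ((t - t₀) / ε)) (by positivity)
    fun i j => (h i j).2 ε hε t₀ t h0 h1 h2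
  have h0 : 0 ≤ ε ^ (q + 1) * (((t - t₀) / ε) ^ (q + 1) + ((t - t₀) / ε) ^ q) := by positivity
  nlinarith
end Coefficients

/-! ### Residual of the truncated expansion -/

section Residual

/-- Reindexing of a triangular double sum by `j = k - l - 1`. -/
theorem sum_range_triangle {E : Type*} [AddCommMonoid E] (f : ℕ → ℕ → E) (N : ℕ) :
    ∑ k ∈ Finset.range (N + 1), ∑ l ∈ Finset.range k, f (k - l - 1) l
      = ∑ j ∈ Finset.range (N + 1), ∑ l ∈ Finset.range (N - j), f j l := by
  induction N with
  | zero => simp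
  | succ N ih =>
    rw [Finset.sum_range_succ, ih, Finset.sum_range_succ (n := N + 1)
      (f := fun j => ∑ l ∈ Finset.range (N + 1 - j), f j l), Nat.sub_self, Finset.range_zero,
      Finset.sum_empty, add_zero, ← Finset.sum_range_reflect (fun l => f (N + 1 - l - 1) l) (N + 1),
      ← Finset.sum_add_distrib]
    refine Finset.sum_congr rfl fun j hj => ?_
    have hj' := Finset.mem_range.1 hj
    rw [show N + 1 - j = N - j + 1 by omega, Finset.sum_range_succ]
    congr 2; omega

variable {E : Type*} [Ring E] [Algebra ℝ E]

/-- Telescoping of the outer hierarchy: only the highest-order term of the residual survives. -/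
theorem outer_residual (φ d : ℕ → E) (a b : E) {ε : ℝ} (hε : ε ≠ 0) (N : ℕ) (h0 : φ 0 * a = 0)
    (hs : ∀ k < N, φ (k + 1) * a = d k - φ k * b) :
    ∑ k ∈ Finset.range (N + 1), ε ^ k • d k
      = ∑ k ∈ Finset.range (N + 1), ε ^ k • (φ k * (ε⁻¹ • a + b))
        + ε ^ N • (d N - φ N * b) := by
  induction N with
  | zero => simp [mul_add, h0]
  | succ N ih =>
    rw [Finset.sum_range_succ, ih fun k hk => hs k (by omega), Finset.sum_range_succ _ (N + 1),
      ← hs N (by omega), mul_add, mul_smul_comm, smul_add, smul_sub, smul_smul,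
      show ε ^ (N + 1) * ε⁻¹ = ε ^ N by rw [pow_succ]; field_simp]
    abel

/-- The residual of the inner hierarchy, regrouped so that the `j`-th layer term multiplies the
error of the truncated Taylor expansion of the generator about the base point. -/
theorem inner_residual (p w : ℕ → E) (a a₀ b : E) {ε : ℝ} (hε : ε ≠ 0) (N : ℕ) :
    ∑ k ∈ Finset.range (N + 1), ε ^ k • ε⁻¹ • (p k * a₀ +
        ∑ l ∈ Finset.range k, p (k - l - 1) * w l)
      = ∑ k ∈ Finset.range (N + 1), ε ^ k • (p k * (ε⁻¹ • a + b))
        - ∑ j ∈ Finset.range (N + 1), (ε ^ j * ε⁻¹) • (p j * (a - a₀ + ε • b -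
            ∑ l ∈ Finset.range (N - j), ε ^ (l + 1) • w l)) := by
  have h1 : ∀ k, ε ^ k • ε⁻¹ • (p k * a₀ + ∑ l ∈ Finset.range k, p (k - l - 1) * w l)
      = (ε ^ k * ε⁻¹) • (p k * a₀) + ∑ l ∈ Finset.range k,
        (fun j l => (ε ^ j * ε⁻¹ * ε ^ (l + 1)) • (p j * w l)) (k - l - 1) l := by
    intro k
    rw [smul_smul, smul_add, Finset.smul_sum]
    congr 1
    refine Finset.sum_congr rfl fun l hl => ?_
    have hl' := Finset.mem_range.1 hl
    have : ε ^ (k - l - 1) * ε⁻¹ * ε ^ (l + 1) = ε ^ k * ε⁻¹ := by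
      rw [mul_right_comm, ← pow_add, show k - l - 1 + (l + 1) = k by omega]
    simp only [this]
  have h2 : ∀ j, (ε ^ j * ε⁻¹) • (p j * (a - a₀ + ε • b -
            ∑ l ∈ Finset.range (N - j), ε ^ (l + 1) • w l))
      = ε ^ j • (p j * (ε⁻¹ • a + b)) - (ε ^ j * ε⁻¹) • (p j * a₀)
        - ∑ l ∈ Finset.range (N - j), (ε ^ j * ε⁻¹ * ε ^ (l + 1)) • (p j * w l) := by
    intro j
    simp only [mul_sub, mul_add, Finset.mul_sum, mul_smul_comm, smul_sub, smul_add, smul_smul,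
      Finset.smul_sum]
    rw [show ε ^ j * ε⁻¹ * ε = ε ^ j by field_simp]
    abel
  simp only [h1, h2, Finset.sum_add_distrib, Finset.sum_sub_distrib]
  rw [sum_range_triangle (fun j l => (ε ^ j * ε⁻¹ * ε ^ (l + 1)) • (p j * w l))]
  abel
end Residual

section Remainder
open scoped Matrix.Norms.Operator
variable {m : ℕ} {T : ℝ} {n : ℕ} {A B : ℝ → Matrix (Fin m) (Fin m) ℝ} {ν : ℝ → Fin m → ℝ}

theorem dmat_hasDerivWithinAt {X : ℝ → Matrix (Fin m) (Fin m) ℝ} {t₀ t : ℝ} (ht₀ : 0 ≤ t₀)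
    (ht : t ∈ Set.Icc t₀ T) {p : ℕ} (hp : 1 ≤ p)
    (hX : ∀ i j, ContDiffOn ℝ (p : ℕ∞) (fun t => X t i j) (Set.Icc (0:ℝ) T)) :
    HasDerivWithinAt X (dmat T X t) (Set.Icc t₀ T) t := by
  refine hasDerivWithinAt_matrix.2 fun i j => ?_
  have hsub : Set.Icc t₀ T ⊆ Set.Icc 0 T := Set.Icc_subset_Icc_left ht₀
  have h1 : DifferentiableOn ℝ (fun t => X t i j) (Set.Icc (0:ℝ) T) :=
    (hX i j).differentiableOn (by
      have : p ≠ 0 := by omega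
      exact_mod_cast this)
  exact ((h1 t (hsub ht)).hasDerivWithinAt).mono hsub

theorem exists_matrix_bound {X : ℝ → Matrix (Fin m) (Fin m) ℝ}
    (hX : ∀ i j, ContinuousOn (fun t => X t i j) (Set.Icc (0:ℝ) T)) :
    ∃ C, 0 < C ∧ ∀ t ∈ Set.Icc (0:ℝ) T, ‖X t‖ ≤ C := by
  obtain ⟨C, hC⟩ := isCompact_Icc.exists_bound_of_continuousOn (continuousOn_matrix_iff.2 hX)
  exact ⟨|C| + 1, by positivity, fun t ht => (hC t ht).trans (by linarith [le_abs_self C])⟩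

/-- Each layer term `Ψ_j` decays exponentially in `τ`, and the Taylor error it multiplies is
`O(ε^{n+2-j} (τ^{n+2-j} + τ^{n+1-j}))`; the powers of `τ` are absorbed by the decay. -/
theorem inner_residual_bound (hT : 0 < T)
    (hA : ∀ i j, ContDiffOn ℝ ((n + 2 : ℕ) : ℕ∞) (fun t => A t i j) (Set.Icc (0:ℝ) T))
    (hB : ∀ i j, ContDiffOn ℝ ((n + 1 : ℕ) : ℕ∞) (fun t => B t i j) (Set.Icc (0:ℝ) T))
    {Ψ : ℕ → ℝ → ℝ → Matrix (Fin m) (Fin m) ℝ} {K κ : ℝ} (hK : 0 < K) (hκ : 0 < κ)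
    (hΨ : ∀ k < n + 2, ∀ t₀ ∈ Set.Icc (0:ℝ) T, ∀ τ, 0 ≤ τ →
      ‖Ψ k t₀ τ‖ ≤ K * Real.exp (-κ * τ)) :
    ∃ C, 0 < C ∧ ∀ ε t₀ t, 0 < ε → 0 ≤ t₀ → t₀ ≤ t → t ≤ T →
      ‖∑ j ∈ Finset.range (n + 1 + 1), (ε ^ j * ε⁻¹) • (Ψ j t₀ ((t - t₀) / ε) *
        (A t - A t₀ + ε • B t - ∑ l ∈ Finset.range (n + 1 - j),
          ε ^ (l + 1) • layerCoeff T A B l t₀ ((t - t₀) / ε)))‖ ≤ C * ε ^ (n + 1) := by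
  obtain ⟨C, hC, h⟩ := exists_bound_sum (Finset.range (n + 1 + 1))
    (fun j (p : ℝ × ℝ × ℝ) => (p.1 ^ j * p.1⁻¹) • (Ψ j p.2.1 ((p.2.2 - p.2.1) / p.1) *
        (A p.2.2 - A p.2.1 + p.1 • B p.2.2 - ∑ l ∈ Finset.range (n + 1 - j),
          p.1 ^ (l + 1) • layerCoeff T A B l p.2.1 ((p.2.2 - p.2.1) / p.1))))
    (fun p => p.1 ^ (n + 1))
    {p | 0 < p.1 ∧ 0 ≤ p.2.1 ∧ p.2.1 ≤ p.2.2 ∧ p.2.2 ≤ T}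
    (fun p hp => pow_nonneg hp.1.le _) (by
      intro j hj
      have hj' := Finset.mem_range.1 hj
      obtain ⟨D, hD, hb⟩ := layer_taylor_bound hT hA hB (q := n + 1 - j) (by omega)
      obtain ⟨C1, hC1, h1⟩ := exists_pow_mul_exp_le (n + 1 - j + 1) hκ
      obtain ⟨C2, hC2, h2⟩ := exists_pow_mul_exp_le (n + 1 - j) hκ
      refine ⟨K * D * (C1 + C2), ?_⟩
      rintro ⟨ε, t₀, t⟩ ⟨hε, h0, h01, hT'⟩
      dsimp only at hε h0 h01 hT' ⊢
      have hb' := hb ε hε t₀ t h0 h01 hT'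
      have hτ : 0 ≤ (t - t₀) / ε := div_nonneg (sub_nonneg.2 h01) hε.le
      have hp := hΨ j (by omega) t₀ ⟨h0, h01.trans hT'⟩ _ hτ
      have e1 := h1 _ hτ
      have e2 := h2 _ hτ
      generalize A t - A t₀ + ε • B t - ∑ l ∈ Finset.range (n + 1 - j),
          ε ^ (l + 1) • layerCoeff T A B l t₀ ((t - t₀) / ε) = Y at hb' ⊢
      set τ := (t - t₀) / ε
      have hexp : Real.exp (-(κ / 2) * τ) ≤ 1 := by
        rw [Real.exp_le_one_iff]
        nlinarith
      have e1' := e1.trans (mul_le_of_le_one_right hC1.le hexp)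
      have e2' := e2.trans (mul_le_of_le_one_right hC2.le hexp)
      have hpow : ε ^ j * ε⁻¹ * ε ^ (n + 1 - j + 1) = ε ^ (n + 1) := by
        rw [mul_right_comm, ← pow_add, show j + (n + 1 - j + 1) = n + 1 + 1 by omega, pow_succ]
        field_simp
      rw [norm_smul, Real.norm_of_nonneg (by positivity)]
      calc ε ^ j * ε⁻¹ * ‖Ψ j t₀ τ * Y‖
          ≤ ε ^ j * ε⁻¹ * (‖Ψ j t₀ τ‖ * ‖Y‖) := by gcongr; exact norm_mul_le _ _
        _ ≤ ε ^ j * ε⁻¹ * ((K * Real.exp (-κ * τ)) * (D * ε ^ (n + 1 - j + 1) *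
              (τ ^ (n + 1 - j + 1) + τ ^ (n + 1 - j)))) := by gcongr
        _ = K * D * (τ ^ (n + 1 - j + 1) * Real.exp (-κ * τ) +
              τ ^ (n + 1 - j) * Real.exp (-κ * τ)) *
              (ε ^ j * ε⁻¹ * ε ^ (n + 1 - j + 1)) := by ring
        _ ≤ K * D * (C1 + C2) * ε ^ (n + 1) := by
            rw [hpow]
            gcongr)
  exact ⟨C, hC, fun ε t₀ t hε h0 h1 h2 => h (ε, t₀, t) ⟨hε, h0, h1, h2⟩⟩

/-- The expansion up to order `n + 1` starts from the exact initial value and solves the forward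
equation up to a residual of order `ε^{n+1}`; dissipativity of the generator `A / ε + B` turns this
into an error bound of the same order, without loss of a factor `1 / ε`. -/
theorem exists_remainder_bound (hm : 1 ≤ m) (hT : 0 < T)
    (hgenA : ∀ t ∈ Set.Icc (0:ℝ) T, IsGenerator (A t))
    (hgenB : ∀ t ∈ Set.Icc (0:ℝ) T, IsGenerator (B t))
    (hqs : ∀ t ∈ Set.Icc (0:ℝ) T, IsQuasiStationary (A t) (ν t))
    (hA : ∀ i j, ContDiffOn ℝ ((n + 2 : ℕ) : ℕ∞) (fun t => A t i j) (Set.Icc (0:ℝ) T))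
    (hB : ∀ i j, ContDiffOn ℝ ((n + 1 : ℕ) : ℕ∞) (fun t => B t i j) (Set.Icc (0:ℝ) T))
    {Ψ : ℕ → ℝ → ℝ → Matrix (Fin m) (Fin m) ℝ} {K κ : ℝ} (hK : 0 < K) (hκ : 0 < κ)
    (hΨ0 : ∀ k < n + 2, ∀ t₀ ∈ Set.Icc (0:ℝ) T,
      Ψ k t₀ 0 = (if k = 0 then 1 else 0) - outer T A B k t₀)
    (hΨ' : ∀ k < n + 2, ∀ t₀ ∈ Set.Icc (0:ℝ) T, ∀ τ, HasDerivAt (Ψ k t₀)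
          (Ψ k t₀ τ * A t₀ + ∑ l ∈ Finset.range k, Ψ (k - l - 1) t₀ τ * layerCoeff T A B l t₀ τ) τ)
    (hΨ : ∀ k < n + 2, ∀ t₀ ∈ Set.Icc (0:ℝ) T, ∀ τ, 0 ≤ τ →
      ‖Ψ k t₀ τ‖ ≤ K * Real.exp (-κ * τ)) :
    ∃ C, 0 < C ∧ ∀ ε t₀ t, 0 < ε → 0 ≤ t₀ → t₀ ≤ t → t ≤ T →
      ∀ P : ℝ → Matrix (Fin m) (Fin m) ℝ,
        IsForwardSolution (fun u => ε⁻¹ • A u + B u) T t₀ P →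
        ‖P t - ∑ k ∈ Finset.range (n + 1 + 1), ε ^ k • outer T A B k t -
          ∑ k ∈ Finset.range (n + 1 + 1), ε ^ k • Ψ k t₀ ((t - t₀) / ε)‖ ≤ C * ε ^ (n + 1) := by
  obtain ⟨C1, hC1, hin⟩ := inner_residual_bound hT hA hB hK hκ hΨ
  have hΦ := fun k hk => outer_contDiffOn (n := n) (B := B) hm hT hgenA hqs hA hB k hk
  obtain ⟨C2, hC2, hd⟩ : ∃ C, 0 < C ∧ ∀ t ∈ Set.Icc (0:ℝ) T,
      ‖dmat T (outer T A B (n + 1)) t - outer T A B (n + 1) t * B t‖ ≤ C := by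
    obtain ⟨a, ha, h1⟩ := exists_matrix_bound (T := T) (X := dmat T (outer T A B (n + 1)))
      (fun i j => ((hΦ (n + 1) (by omega) i j).continuousOn_derivWithin (uniqueDiffOn_Icc hT)
        (by exact_mod_cast (by omega : 1 ≤ n + 2 - (n + 1)))))
    obtain ⟨b, hb, h2⟩ := exists_matrix_bound (T := T) (X := outer T A B (n + 1))
      (fun i j => (hΦ (n + 1) (by omega) i j).continuousOn)
    obtain ⟨c, hc, h3⟩ := exists_matrix_bound (T := T) (X := B)
      (fun i j => (hB i j).continuousOn)
    refine ⟨a + b * c, by positivity, fun t ht => (norm_sub_le _ _).trans ?_⟩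
    gcongr
    · exact h1 t ht
    · exact (norm_mul_le _ _).trans (mul_le_mul (h2 t ht) (h3 t ht) (norm_nonneg _) hb.le)
  refine ⟨(C1 + C2) * T, by positivity, fun ε t₀ t hε h0 h01 hT' P hP => ?_⟩
  have ht₀ : t₀ ∈ Set.Icc (0:ℝ) T := ⟨h0, h01.trans hT'⟩
  have hsub : Set.Icc t₀ T ⊆ Set.Icc 0 T := Set.Icc_subset_Icc_left h0
  set S : ℝ → Matrix (Fin m) (Fin m) ℝ := fun u =>
    ∑ j ∈ Finset.range (n + 1 + 1), (ε ^ j * ε⁻¹) • (Ψ j t₀ ((u - t₀) / ε) *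
        (A u - A t₀ + ε • B u - ∑ l ∈ Finset.range (n + 1 - j),
          ε ^ (l + 1) • layerCoeff T A B l t₀ ((u - t₀) / ε))) with hS
  set D : ℝ → Matrix (Fin m) (Fin m) ℝ := fun u =>
    dmat T (outer T A B (n + 1)) u - outer T A B (n + 1) u * B u with hD
  set X : ℝ → Matrix (Fin m) (Fin m) ℝ := fun u =>
    P u - ∑ k ∈ Finset.range (n + 1 + 1), ε ^ k • outer T A B k u -
          ∑ k ∈ Finset.range (n + 1 + 1), ε ^ k • Ψ k t₀ ((u - t₀) / ε) with hX
  have hderiv : ∀ u ∈ Set.Icc t₀ T, HasDerivWithinAt X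
      (X u * (ε⁻¹ • A u + B u) + (S u - ε ^ (n + 1) • D u)) (Set.Icc t₀ T) u := by
    intro u hu
    have d1 : HasDerivWithinAt P (P u * (ε⁻¹ • A u + B u)) (Set.Icc t₀ T) u :=
      hasDerivWithinAt_matrix.2 (hP.2 u hu)
    have d2 : HasDerivWithinAt (fun u => ∑ k ∈ Finset.range (n + 1 + 1), ε ^ k • outer T A B k u)
        (∑ k ∈ Finset.range (n + 1 + 1), ε ^ k • dmat T (outer T A B k) u) (Set.Icc t₀ T) u := by
      refine HasDerivWithinAt.fun_sum fun k hk => ?_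
      have hk' := Finset.mem_range.1 hk
      exact (dmat_hasDerivWithinAt h0 hu (by omega) (hΦ k (by omega))).const_smul (ε ^ k)
    have d3 : HasDerivWithinAt
        (fun u => ∑ k ∈ Finset.range (n + 1 + 1), ε ^ k • Ψ k t₀ ((u - t₀) / ε))
        (∑ k ∈ Finset.range (n + 1 + 1), ε ^ k • ε⁻¹ • (Ψ k t₀ ((u - t₀) / ε) * A t₀ +
          ∑ l ∈ Finset.range k, Ψ (k - l - 1) t₀ ((u - t₀) / ε) *
            layerCoeff T A B l t₀ ((u - t₀) / ε))) (Set.Icc t₀ T) u := by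
      refine HasDerivWithinAt.fun_sum fun k hk => ?_
      have hk' := Finset.mem_range.1 hk
      have hh : HasDerivAt (fun u : ℝ => (u - t₀) / ε) ε⁻¹ u := by
        simpa using ((hasDerivAt_id u).sub_const t₀).div_const ε
      exact ((hΨ' k (by omega) t₀ ht₀ _).scomp u hh).hasDerivWithinAt.const_smul (ε ^ k)
    refine ((d1.sub d2).sub d3).congr_deriv ?_
    rw [outer_residual (fun k => outer T A B k u) (fun k => dmat T (outer T A B k) u)
        (A u) (B u) hε.ne' (n + 1) (outer_zero_mul_A hm hgenA hqs u (hsub hu))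
        (fun k hk => outer_mul_A hm hT hgenA hgenB hqs hA hB k (by omega) u (hsub hu)),
      inner_residual (fun k => Ψ k t₀ ((u - t₀) / ε))
        (fun l => layerCoeff T A B l t₀ ((u - t₀) / ε)) (A u) (A t₀) (B u) hε.ne' (n + 1)]
    simp only [hX, hS, hD, sub_mul, Finset.sum_mul, smul_mul_assoc]
    abel
  have hbound : ∀ u ∈ Set.Icc t₀ T, ‖S u - ε ^ (n + 1) • D u‖ ≤ (C1 + C2) * ε ^ (n + 1) := by
    intro u hu
    have a1 : ‖S u‖ ≤ _ := hin ε t₀ u hε h0 hu.1 hu.2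
    have a2 : ‖D u‖ ≤ _ := hd u (hsub hu)
    refine (norm_sub_le _ _).trans ?_
    rw [norm_smul, Real.norm_of_nonneg (by positivity)]
    have := mul_le_mul_of_nonneg_left a2 (by positivity : 0 ≤ ε ^ (n + 1))
    linarith
  have hX0 : X t₀ = 0 := by
    have : ∀ k ∈ Finset.range (n + 1 + 1), ε ^ k • Ψ k t₀ 0
        = (if k = 0 then (1 : Matrix (Fin m) (Fin m) ℝ) else 0) - ε ^ k • outer T A B k t₀ := by
      intro k hk
      rw [hΨ0 k (by have := Finset.mem_range.1 hk; omega) t₀ ht₀, smul_sub]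
      congr 1
      split_ifs with h
      · simp [h]
      · simp
    simp only [hX, sub_self, zero_div]
    rw [Finset.sum_congr rfl this, hP.1, Finset.sum_sub_distrib, Finset.sum_ite_eq' ]
    simp
  have key := norm_le_of_dissipative hderiv (fun u hu =>
    (((hgenA u (hsub hu)).smul (inv_nonneg.2 hε.le)).add
      (hgenB u (hsub hu))).norm_one_add_smul_le) hbound t ⟨h01, hT'⟩
  rw [hX0, norm_zero, zero_add] at key
  refine key.trans ?_
  have : t - t₀ ≤ T := by linarith
  calc (C1 + C2) * ε ^ (n + 1) * (t - t₀) ≤ (C1 + C2) * ε ^ (n + 1) * T := by gcongr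
    _ = _ := by ring
end Remainder

/-! ### Conclusion -/

section Assembly
open scoped Matrix.Norms.Operator
variable {m : ℕ} {T : ℝ} {n : ℕ} {A B : ℝ → Matrix (Fin m) (Fin m) ℝ} {ν : ℝ → Fin m → ℝ}

/-- Existence of the layer terms together with the error bound for the `n`-th order expansion,
expressed through row sums. -/
theorem exists_layer_and_remainder (hm : 1 ≤ m) (hT : 0 < T)
    (hgenA : ∀ t ∈ Set.Icc (0:ℝ) T, IsGenerator (A t))
    (hgenB : ∀ t ∈ Set.Icc (0:ℝ) T, IsGenerator (B t))
    (hqs : ∀ t ∈ Set.Icc (0:ℝ) T, IsQuasiStationary (A t) (ν t))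
    (hA : ∀ i j, ContDiffOn ℝ ((n + 2 : ℕ) : ℕ∞) (fun t => A t i j) (Set.Icc (0:ℝ) T))
    (hB : ∀ i j, ContDiffOn ℝ ((n + 1 : ℕ) : ℕ∞) (fun t => B t i j) (Set.Icc (0:ℝ) T)) :
    ∃ (Ψ : ℕ → ℝ → ℝ → Matrix (Fin m) (Fin m) ℝ) (K κ C : ℝ), 0 < K ∧ 0 < κ ∧ 0 < C ∧
      (∀ k ≤ n, ∀ t₀ ∈ Set.Icc (0:ℝ) T,
        Ψ k t₀ 0 = (if k = 0 then 1 else 0) - outer T A B k t₀ ∧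
        (∀ τ, 0 ≤ τ → ∀ i j, HasDerivWithinAt (fun r => Ψ k t₀ r i j)
          ((Ψ k t₀ τ * A t₀) i j + Rterm T A B Ψ k t₀ τ i j) (Set.Ici (0:ℝ)) τ) ∧
        ∀ τ, 0 ≤ τ → ∀ i, ∑ j, |Ψ k t₀ τ i j| ≤ K * Real.exp (-κ * τ)) ∧
      ∀ ε ∈ Set.Ioc (0:ℝ) 1, ∀ t₀ t : ℝ, 0 ≤ t₀ → t₀ ≤ t → t ≤ T →
        ∀ P : ℝ → Matrix (Fin m) (Fin m) ℝ,
          IsForwardSolution (fun u => ε⁻¹ • A u + B u) T t₀ P →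
          ∀ i, ∑ j, |P t i j -
              (∑ k ∈ Finset.range (n + 1), ε ^ k * outer T A B k t i j) -
              (∑ k ∈ Finset.range (n + 1), ε ^ k * Ψ k t₀ ((t - t₀) / ε) i j)|
            ≤ C * ε ^ (n + 1) := by
  have hΦ := fun k hk => outer_contDiffOn (n := n) (B := B) hm hT hgenA hqs hA hB k hk
  have hΦb : ∀ k ≤ n + 2, ∃ C, 0 < C ∧ ∀ t ∈ Set.Icc (0:ℝ) T, ‖outer T A B k t‖ ≤ C :=
    fun k hk => exists_matrix_bound fun i j => (hΦ k hk i j).continuousOn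
  have hdecay := exists_uniform_decay hgenA hqs
    (continuousOn_matrix_iff.2 fun i j => (hA i j).continuousOn)
  obtain ⟨Ψ, K, κ, hK, hκ, hΨ⟩ := exists_inner (A := A) (T := T) (layerCoeff T A B)
    (fun k t₀ => (if k = 0 then 1 else 0) - outer T A B k t₀) hdecay (n + 2)
    (fun l _ t₀ _ => layerCoeff_continuous l t₀)
    (fun l hl t₀ ht₀ τ => layerCoeff_mulVec_one hT hgenA hgenB hA hB (by omega) ht₀ τ)
    (fun l hl => layerCoeff_bound hT hA hB (by omega))
    (fun k hk t₀ ht₀ => by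
      rw [Matrix.sub_mulVec, outer_mulVec_one hm hT hgenA hgenB hqs hA hB k (by omega) t₀ ht₀]
      split_ifs <;> simp)
    (fun k hk => by
      obtain ⟨c, hc, h⟩ := hΦb k (by omega)
      exact ⟨_, fun t₀ ht₀ => (norm_sub_le _ _).trans (add_le_add_right (h t₀ ht₀) _)⟩)
  obtain ⟨C, hC, hrem⟩ := exists_remainder_bound hm hT hgenA hgenB hqs hA hB hK hκ
    (fun k hk t₀ ht₀ => (hΨ k hk t₀ ht₀).1) (fun k hk t₀ ht₀ => (hΨ k hk t₀ ht₀).2.1)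
    (fun k hk t₀ ht₀ => (hΨ k hk t₀ ht₀).2.2)
  obtain ⟨b, hb, hΦn⟩ := hΦb (n + 1) (by omega)
  refine ⟨Ψ, K, κ, C + b + K, hK, hκ, by positivity, fun k hk t₀ ht₀ => ?_, ?_⟩
  · obtain ⟨h1, h2, h3⟩ := hΨ k (by omega) t₀ ht₀
    exact ⟨h1, fun τ _ => hasDerivWithinAt_matrix.1 (h2 τ).hasDerivWithinAt,
      fun τ hτ i => (row_sum_le_norm _ i).trans (h3 τ hτ)⟩
  · intro ε hε t₀ t h0 h1 h2 P hP i
    have hε0 : 0 < ε := hε.1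
    have hτ : 0 ≤ (t - t₀) / ε := div_nonneg (sub_nonneg.2 h1) hε0.le
    have e1 := hrem ε t₀ t hε0 h0 h1 h2 P hP
    have e2 := hΦn t ⟨h0.trans h1, h2⟩
    have e3 := (hΨ (n + 1) (by omega) t₀ ⟨h0, h1.trans h2⟩).2.2 _ hτ
    have e4 : Real.exp (-κ * ((t - t₀) / ε)) ≤ 1 := by
      rw [Real.exp_le_one_iff]
      nlinarith
    have e3' := e3.trans (mul_le_of_le_one_right hK.le e4)
    rw [Finset.sum_range_succ _ (n + 1), Finset.sum_range_succ _ (n + 1)] at e1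
    set Y : Matrix (Fin m) (Fin m) ℝ := P t - ∑ k ∈ Finset.range (n + 1), ε ^ k • outer T A B k t -
          ∑ k ∈ Finset.range (n + 1), ε ^ k • Ψ k t₀ ((t - t₀) / ε) with hY
    have hYn : ‖Y‖ ≤ (C + b + K) * ε ^ (n + 1) := by
      have hsplit : Y = (P t - (∑ k ∈ Finset.range (n + 1), ε ^ k • outer T A B k t +
          ε ^ (n + 1) • outer T A B (n + 1) t) -
          (∑ k ∈ Finset.range (n + 1), ε ^ k • Ψ k t₀ ((t - t₀) / ε) +
            ε ^ (n + 1) • Ψ (n + 1) t₀ ((t - t₀) / ε)))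
          + ε ^ (n + 1) • (outer T A B (n + 1) t + Ψ (n + 1) t₀ ((t - t₀) / ε)) := by
        rw [hY, smul_add]
        abel
      rw [hsplit]
      refine (norm_add_le _ _).trans ?_
      rw [norm_smul, Real.norm_of_nonneg (by positivity)]
      have := mul_le_mul_of_nonneg_left ((norm_add_le _ _).trans (add_le_add e2 e3'))
        (by positivity : 0 ≤ ε ^ (n + 1))
      linarith
    refine le_trans (le_of_eq ?_) ((row_sum_le_norm Y i).trans hYn)
    refine Finset.sum_congr rfl fun j _ => ?_
    simp only [hY, Matrix.sub_apply, Matrix.sum_apply, Matrix.smul_apply, smul_eq_mul]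
end Assembly

/-- Full `n`-th order asymptotic expansion of the transition matrix
`P_ε(t₀,t)` with outer terms `Φ_k`, initial-layer terms `Ψ_k`, exponentially decaying
`Ψ_k`, and remainder of order `ε^{n+1}`. -/
theorem transition_matrix_asymptotic_expansion {m : ℕ} (hm : 1 ≤ m) (T : ℝ) (hT : 0 < T)
    (n : ℕ) (A B : ℝ → Matrix (Fin m) (Fin m) ℝ) (ν : ℝ → Fin m → ℝ)
    (hgenA : ∀ t ∈ Set.Icc (0:ℝ) T, IsGenerator (A t))
    (hgenB : ∀ t ∈ Set.Icc (0:ℝ) T, IsGenerator (B t))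
    (hqs : ∀ t ∈ Set.Icc (0:ℝ) T, IsQuasiStationary (A t) (ν t))
    (hA : ContDiffOn ℝ ((n + 2 : ℕ) : ℕ∞) (fun t (i j : Fin m) => A t i j) (Set.Icc (0:ℝ) T))
    (hB : ContDiffOn ℝ ((n + 1 : ℕ) : ℕ∞) (fun t (i j : Fin m) => B t i j) (Set.Icc (0:ℝ) T)) :
    ∃ (Φ : ℕ → ℝ → Matrix (Fin m) (Fin m) ℝ)
      (Ψ : ℕ → ℝ → ℝ → Matrix (Fin m) (Fin m) ℝ) (K κ₀ ε₀ : ℝ),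
      0 < K ∧ 0 < κ₀ ∧ 0 < ε₀ ∧
      -- (a) `Φ₀(t) = 𝟙ν(t)` and `Φ_k ∈ C^{n+2-k}`
      (∀ t ∈ Set.Icc (0:ℝ) T, Φ 0 t = oneNu (ν t)) ∧
      (∀ k ≤ n, ContDiffOn ℝ ((n + 2 - k : ℕ) : ℕ∞)
        (fun t (i j : Fin m) => Φ k t i j) (Set.Icc (0:ℝ) T)) ∧
      -- (b) `Φ_k(t) A(t) = Φ'_{k-1}(t) - Φ_{k-1}(t) B(t)` for `1 ≤ k ≤ n`
      (∀ k, 1 ≤ k → k ≤ n → ∀ t ∈ Set.Icc (0:ℝ) T, ∀ i j,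
        (Φ k t * A t) i j =
          derivWithin (fun u => Φ (k - 1) u i j) (Set.Icc (0:ℝ) T) t -
            (Φ (k - 1) t * B t) i j) ∧
      -- (c) `∂_τ Ψ₀(t₀,τ) = Ψ₀(t₀,τ) A(t₀)`, `Ψ₀(t₀,0) = I - Φ₀(t₀)`
      (∀ t₀ ∈ Set.Icc (0:ℝ) T,
        Ψ 0 t₀ 0 = 1 - Φ 0 t₀ ∧
        ∀ τ : ℝ, 0 ≤ τ → ∀ i j,
          HasDerivWithinAt (fun r => Ψ 0 t₀ r i j) ((Ψ 0 t₀ τ * A t₀) i j)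
            (Set.Ici (0:ℝ)) τ) ∧
      -- (d) `∂_τ Ψ_k(t₀,τ) = Ψ_k(t₀,τ) A(t₀) + R_k(t₀,τ)`, `Ψ_k(t₀,0) = -Φ_k(t₀)`
      (∀ k, 1 ≤ k → k ≤ n → ∀ t₀ ∈ Set.Icc (0:ℝ) T,
        Ψ k t₀ 0 = -Φ k t₀ ∧
        ∀ τ : ℝ, 0 ≤ τ → ∀ i j,
          HasDerivWithinAt (fun r => Ψ k t₀ r i j)
            ((Ψ k t₀ τ * A t₀) i j + Rterm T A B Ψ k t₀ τ i j)
            (Set.Ici (0:ℝ)) τ) ∧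
      -- (e) `‖Ψ_k(t₀,τ)‖∞ ≤ K exp(-κ₀ τ)`
      (∀ k ≤ n, ∀ t₀ ∈ Set.Icc (0:ℝ) T, ∀ τ : ℝ, 0 ≤ τ → ∀ i,
        ∑ j, |Ψ k t₀ τ i j| ≤ K * Real.exp (-κ₀ * τ)) ∧
      -- (f) the expansion with remainder `O(ε^{n+1})`
      (∀ ε ∈ Set.Ioc (0:ℝ) ε₀, ∀ t₀ t : ℝ, 0 ≤ t₀ → t₀ ≤ t → t ≤ T →
        ∀ P : ℝ → Matrix (Fin m) (Fin m) ℝ,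
          IsForwardSolution (fun u => ε⁻¹ • A u + B u) T t₀ P →
          ∀ i, ∑ j, |P t i j -
              (∑ k ∈ Finset.range (n + 1), ε ^ k * Φ k t i j) -
              (∑ k ∈ Finset.range (n + 1), ε ^ k * Ψ k t₀ ((t - t₀) / ε) i j)|
            ≤ K * ε ^ (n + 1)) := by
  have hA' : ∀ i j, ContDiffOn ℝ ((n + 2 : ℕ) : ℕ∞) (fun t => A t i j) (Set.Icc (0:ℝ) T) :=
    fun i j => contDiffOn_pi.1 (contDiffOn_pi.1 hA i) j
  have hB' : ∀ i j, ContDiffOn ℝ ((n + 1 : ℕ) : ℕ∞) (fun t => B t i j) (Set.Icc (0:ℝ) T) :=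
    fun i j => contDiffOn_pi.1 (contDiffOn_pi.1 hB i) j
  obtain ⟨Ψ, K, κ, C, hK, hκ, hC, hΨ, hrem⟩ :=
    exists_layer_and_remainder hm hT hgenA hgenB hqs hA' hB'
  refine ⟨outer T A B, Ψ, K + C, κ, 1, by positivity, hκ, one_pos,
    outer_zero hm hgenA hqs, ?_, ?_, ?_, ?_, ?_, ?_⟩
  · exact fun k hk => contDiffOn_pi.2 fun i => contDiffOn_pi.2 fun j =>
      outer_contDiffOn hm hT hgenA hqs hA' hB' k (by omega) i j
  · intro k hk1 hk t ht i j
    obtain ⟨k, rfl⟩ : ∃ l, k = l + 1 := ⟨k - 1, by omega⟩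
    rw [outer_mul_A hm hT hgenA hgenB hqs hA' hB' k (by omega) t ht]
    rfl
  · intro t₀ ht₀
    obtain ⟨h1, h2, -⟩ := hΨ 0 (by omega) t₀ ht₀
    refine ⟨by simpa using h1, fun τ hτ i j => ?_⟩
    have h3 := h2 τ hτ i j
    simpa [Rterm] using h3
  · intro k hk1 hk t₀ ht₀
    obtain ⟨h1, h2, -⟩ := hΨ k hk t₀ ht₀
    refine ⟨by rw [h1, if_neg (by omega), zero_sub], h2⟩
  · intro k hk t₀ ht₀ τ hτ i
    refine ((hΨ k hk t₀ ht₀).2.2 τ hτ i).trans ?_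
    gcongr
    linarith
  · intro ε hε t₀ t h0 h1 h2 P hP i
    refine (hrem ε hε t₀ t h0 h1 h2 P hP i).trans ?_
    have : 0 < ε := hε.1
    gcongr
    linarith
end

section
/- For every γ ∈ (0,1) there exists a constant A_γ > 0, depending only on γ, with the following property: for every probability space, every N ≥ 1, every filtration (𝒢_k)_{0≤k≤N}, and every sequence of integrable random variables d_1, …, d_N such that d_k is 𝒢_k-measurable, E[d_k | 𝒢_{k−1}] = 0 almost surely, and E|d_k|^{1+γ} < ∞ for each k, one has E[ max_{1≤k≤N} | Σ_{j=1}^k d_j |^{1+γ} ] ≤ A_γ Σ_{j=1}^N E|d_j|^{1+γ}. -/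
open MeasureTheory

/-!
Write `p = 1 + γ`, `s k` for the partial sums, `m k` for the running maximum of `|s k|`, and
consider the potential `W(x, m) = γ m ^ p - p m ^ γ |x| + K |x| ^ p`.

* One step (`potential_step`): `W(s (k+1), m (k+1)) ≤ W(s k, m k) + H_k d (k+1) + 2 p K |d (k+1)| ^ p`
  holds pointwise, where `H_k` depends on `(s k, m k)` only. The first two terms of `W` are handled
  as in the proof of Doob's maximal inequality; the last one by the von Bahr–Esseen type bound
  `|x + y| ^ p ≤ |x| ^ p + p φ(x) y + 2 p |y| ^ p` with `φ(x) = sgn(x) |x| ^ γ`, which follows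
  from convexity of `|x| ^ p` and `γ`-Hölder continuity of `φ`.
* Young's inequality gives `γ / 2 * m ^ p ≤ W(x, m)` for a suitable `K` (`potential_lower`).

Summing over `k` bounds `m N ^ p` pointwise by the martingale transform `∑ H_k d (k+1)`, which has
mean zero, plus a multiple of `∑ |d (k+1)| ^ p`; the claim follows by integration.
-/

namespace MDSMaximal

/-- The sign of `x`, with the convention `sgn 0 = 1`. -/
noncomputable def sgn (x : ℝ) : ℝ := if 0 ≤ x then 1 else -1

/-- The odd power `sgn x * |x| ^ γ`; up to the factor `1 + γ`, the derivative of
`|x| ^ (1 + γ)`. -/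
noncomputable def phi (γ x : ℝ) : ℝ := sgn x * |x| ^ γ

lemma sgn_mul_self (x : ℝ) : sgn x * x = |x| := by
  unfold sgn
  split_ifs with h
  · simp [abs_of_nonneg h]
  · simp [abs_of_neg (not_le.1 h)]

lemma abs_sgn (x : ℝ) : |sgn x| = 1 := by
  unfold sgn
  split_ifs <;> simp

lemma sgn_mul_le (x y : ℝ) : sgn x * y ≤ |y| := by
  calc sgn x * y ≤ |sgn x * y| := le_abs_self _
    _ = |y| := by rw [abs_mul, abs_sgn, one_mul]

lemma measurable_sgn : Measurable sgn :=
  Measurable.ite measurableSet_Ici measurable_const measurable_const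

lemma rpow_mul_self {γ a : ℝ} (hγ : 0 < γ) (ha : 0 ≤ a) : a ^ γ * a = a ^ (1 + γ) := by
  rw [Real.rpow_add_of_nonneg ha zero_le_one hγ.le, Real.rpow_one, mul_comm]

lemma young {γ a b : ℝ} (hγ : 0 < γ) (ha : 0 ≤ a) (hb : 0 ≤ b) :
    (1 + γ) * (a ^ γ * b) ≤ b ^ (1 + γ) + γ * a ^ (1 + γ) := by
  have hpos : 0 < 1 + γ := by linarith
  have hpq : ((1 + γ) / γ).HolderConjugate (1 + γ) := by
    rw [Real.holderConjugate_iff]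
    refine ⟨by rw [lt_div_iff₀ hγ]; linarith, ?_⟩
    field_simp
    ring
  have h := Real.young_inequality_of_nonneg (Real.rpow_nonneg ha γ) hb hpq
  rw [← Real.rpow_mul ha, mul_div_cancel₀ _ hγ.ne'] at h
  have h2 := mul_le_mul_of_nonneg_left h hpos.le
  refine h2.trans (le_of_eq ?_)
  field_simp
  ring

lemma phi_neg {γ : ℝ} (hγ : 0 < γ) (x : ℝ) : phi γ (-x) = -phi γ x := by
  unfold phi sgn
  rcases lt_trichotomy x 0 with h | h | h
  · rw [if_pos (by linarith), if_neg (by linarith), abs_neg]; ring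
  · subst h; simp [Real.zero_rpow hγ.ne']
  · rw [if_neg (by linarith), if_pos h.le, abs_neg]; ring

lemma phi_of_nonneg {γ x : ℝ} (h : 0 ≤ x) : phi γ x = x ^ γ := by
  simp [phi, sgn, h, abs_of_nonneg h]

lemma rpow_sub_rpow_le {γ a b : ℝ} (hγ : 0 < γ) (hγ1 : γ < 1) (hb : 0 ≤ b) (hab : b ≤ a) :
    a ^ γ - b ^ γ ≤ (a - b) ^ γ := by
  have := Real.rpow_add_le_add_rpow (sub_nonneg.2 hab) hb hγ.le hγ1.le
  rw [sub_add_cancel] at this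
  linarith

lemma phi_sub_le {γ : ℝ} (hγ : 0 < γ) (hγ1 : γ < 1) {a b : ℝ} (hab : b ≤ a) :
    phi γ a - phi γ b ≤ 2 * (a - b) ^ γ := by
  have h0 : 0 ≤ (a - b) ^ γ := Real.rpow_nonneg (sub_nonneg.2 hab) _
  rcases le_total 0 b with hb | hb
  · rw [phi_of_nonneg hb, phi_of_nonneg (hb.trans hab)]
    linarith [rpow_sub_rpow_le hγ hγ1 hb hab]
  · have eb : phi γ b = -(-b) ^ γ := by
      rw [← phi_of_nonneg (neg_nonneg.2 hb), phi_neg hγ, neg_neg]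
    rcases le_total 0 a with ha | ha
    · rw [phi_of_nonneg ha, eb]
      have h1 : a ^ γ ≤ (a - b) ^ γ := Real.rpow_le_rpow ha (by linarith) hγ.le
      have h2 : (-b) ^ γ ≤ (a - b) ^ γ := Real.rpow_le_rpow (by linarith) (by linarith) hγ.le
      linarith
    · have ea : phi γ a = -(-a) ^ γ := by
        rw [← phi_of_nonneg (neg_nonneg.2 ha), phi_neg hγ, neg_neg]
      rw [ea, eb]
      have := rpow_sub_rpow_le hγ hγ1 (neg_nonneg.2 ha) (neg_le_neg hab)
      rw [show -b - -a = a - b by ring] at this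
      linarith

lemma phi_sub_mul_le {γ : ℝ} (hγ : 0 < γ) (hγ1 : γ < 1) (x y : ℝ) :
    (phi γ (x + y) - phi γ x) * y ≤ 2 * |y| ^ (1 + γ) := by
  rw [← rpow_mul_self hγ (abs_nonneg y)]
  rcases le_total 0 y with hy | hy
  · have := phi_sub_le hγ hγ1 (show x ≤ x + y by linarith)
    rw [add_sub_cancel_left] at this
    rw [abs_of_nonneg hy, ← mul_assoc]
    exact mul_le_mul_of_nonneg_right this hy
  · have := phi_sub_le hγ hγ1 (show x + y ≤ x by linarith)
    rw [show x - (x + y) = -y by ring] at this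
    rw [abs_of_nonpos hy]
    nlinarith

/-- The tangent line of the convex function `|x| ^ (1 + γ)` at `z` lies below its graph. -/
lemma tangent_le {γ : ℝ} (hγ : 0 < γ) (x z : ℝ) :
    |z| ^ (1 + γ) + (1 + γ) * (phi γ z * (x - z)) ≤ |x| ^ (1 + γ) := by
  have h1 := young hγ (abs_nonneg z) (abs_nonneg x)
  have h2 : phi γ z * z = |z| ^ (1 + γ) := by
    rw [← rpow_mul_self hγ (abs_nonneg z), phi, mul_right_comm, sgn_mul_self, mul_comm]
  have h3 : phi γ z * x ≤ |z| ^ γ * |x| := by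
    rw [phi, mul_right_comm, mul_comm]
    exact mul_le_mul_of_nonneg_left (sgn_mul_le z x) (Real.rpow_nonneg (abs_nonneg z) _)
  have h4 := mul_le_mul_of_nonneg_left h3 (show 0 ≤ 1 + γ by linarith)
  rw [mul_sub, h2]
  linarith

/-- First-order expansion of `|x| ^ (1 + γ)` with remainder of order `|y| ^ (1 + γ)`. -/
lemma abs_add_rpow_le {γ : ℝ} (hγ : 0 < γ) (hγ1 : γ < 1) (x y : ℝ) :
    |x + y| ^ (1 + γ) ≤ |x| ^ (1 + γ) + (1 + γ) * (phi γ x * y)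
      + 2 * (1 + γ) * |y| ^ (1 + γ) := by
  have h1 := tangent_le hγ x (x + y)
  have h2 := mul_le_mul_of_nonneg_left (phi_sub_mul_le hγ hγ1 x y)
    (show 0 ≤ 1 + γ by linarith)
  rw [show x - (x + y) = -y by ring] at h1
  linarith

/-- The potential `γ m ^ p - p m ^ γ |x| + K |x| ^ p`, `p = 1 + γ`, of a position `x` with
running maximum `m`. -/
noncomputable def potential (γ K x m : ℝ) : ℝ :=
  γ * m ^ (1 + γ) - (1 + γ) * (m ^ γ * |x|) + K * |x| ^ (1 + γ)

/-- The coefficient of the increment in `potential_step`: the integrand of the martingale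
transform. -/
noncomputable def slope (γ K x m : ℝ) : ℝ :=
  (1 + γ) * (K * phi γ x - m ^ γ * sgn x)

lemma potential_step {γ K : ℝ} (hγ : 0 < γ) (hγ1 : γ < 1) (hK : 0 ≤ K) (x y : ℝ) {m : ℝ}
    (hm : 0 ≤ m) :
    potential γ K (x + y) (max m |x + y|) ≤
      potential γ K x m + slope γ K x m * y + 2 * (1 + γ) * K * |y| ^ (1 + γ) := by
  have hp : 0 ≤ 1 + γ := by linarith
  have h1 := mul_le_mul_of_nonneg_left (abs_add_rpow_le hγ hγ1 x y) hK
  -- Replacing the new maximum by the old one only increases the Doob part of the potential.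
  have h2 : γ * (max m |x + y|) ^ (1 + γ) - (1 + γ) * ((max m |x + y|) ^ γ * |x + y|)
      ≤ γ * m ^ (1 + γ) - (1 + γ) * (m ^ γ * |x + y|) := by
    rcases le_total |x + y| m with h | h
    · rw [max_eq_left h]
    · rw [max_eq_right h, rpow_mul_self hγ (abs_nonneg _)]
      linarith [young hγ hm (abs_nonneg (x + y))]
  have h3 : |x| + sgn x * y ≤ |x + y| := by
    have := sgn_mul_le x (x + y)
    rwa [mul_add, sgn_mul_self] at this
  have h4 := mul_le_mul_of_nonneg_left
    (mul_le_mul_of_nonneg_left h3 (Real.rpow_nonneg hm γ)) hp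
  unfold potential slope
  linarith

/-- The weight `K` of `|x| ^ (1 + γ)` in the potential. -/
noncomputable def weight (γ : ℝ) : ℝ := (((1 / 2 : ℝ) ^ γ)⁻¹) ^ (1 + γ)

lemma weight_pos (γ : ℝ) : 0 < weight γ := by unfold weight; positivity

lemma potential_lower {γ : ℝ} (hγ : 0 < γ) (x : ℝ) {m : ℝ} (hm : 0 ≤ m) :
    γ / 2 * m ^ (1 + γ) ≤ potential γ (weight γ) x m := by
  have hc : (0 : ℝ) < (1 / 2 : ℝ) ^ γ := by positivity
  have h := young hγ (show 0 ≤ 1 / 2 * m by linarith)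
    (show 0 ≤ ((1 / 2 : ℝ) ^ γ)⁻¹ * |x| by positivity)
  rw [Real.mul_rpow (by norm_num) hm, Real.mul_rpow (by norm_num) hm,
    Real.mul_rpow (by positivity) (abs_nonneg x)] at h
  have e : (1 / 2 : ℝ) ^ γ * m ^ γ * (((1 / 2 : ℝ) ^ γ)⁻¹ * |x|) = m ^ γ * |x| := by
    field_simp
  rw [e] at h
  have h2 : (1 / 2 : ℝ) ^ (1 + γ) ≤ 1 / 2 := by
    have := Real.rpow_le_rpow_of_exponent_ge (x := (1 / 2 : ℝ)) (by norm_num) (by norm_num)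
      (show (1 : ℝ) ≤ 1 + γ by linarith)
    rwa [Real.rpow_one] at this
  have h3 := mul_le_mul_of_nonneg_left
    (mul_le_mul_of_nonneg_right h2 (Real.rpow_nonneg hm (1 + γ))) hγ.le
  unfold potential weight
  linarith

/-- The partial sum `d 1 + ⋯ + d k`. -/
def psum (d : ℕ → ℝ) (k : ℕ) : ℝ := ∑ j ∈ Finset.range k, d (j + 1)

/-- The running maximum of `|psum d j|` over `j ≤ k`. -/
noncomputable def rmax (d : ℕ → ℝ) : ℕ → ℝ
  | 0 => 0
  | k + 1 => max (rmax d k) |psum d (k + 1)|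

lemma psum_eq (d : ℕ → ℝ) (k : ℕ) : psum d k = ∑ j ∈ Finset.Icc 1 k, d j := by
  induction k with
  | zero => simp [psum]
  | succ k ih =>
    rw [Finset.sum_Icc_succ_top (by omega), ← ih, psum, psum, Finset.sum_range_succ]

lemma rmax_mono (d : ℕ → ℝ) : Monotone (rmax d) :=
  monotone_nat_of_le_succ fun _ => le_max_left _ _

lemma rmax_nonneg (d : ℕ → ℝ) (k : ℕ) : 0 ≤ rmax d k := rmax_mono d (Nat.zero_le k)

lemma abs_psum_le_rmax (d : ℕ → ℝ) (k : ℕ) : |psum d k| ≤ rmax d k := by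
  cases k with
  | zero => simp [psum, rmax]
  | succ k => exact le_max_right _ _

/-- Pathwise bound of the maximum by a transform of `d` plus the power sum. -/
lemma pathwise {γ : ℝ} (hγ : 0 < γ) (hγ1 : γ < 1) (d : ℕ → ℝ) (N : ℕ) :
    γ / 2 * rmax d N ^ (1 + γ) ≤
      ∑ k ∈ Finset.range N, (slope γ (weight γ) (psum d k) (rmax d k) * d (k + 1)
        + 2 * (1 + γ) * weight γ * |d (k + 1)| ^ (1 + γ)) := by
  refine (potential_lower hγ (psum d N) (rmax_nonneg d N)).trans ?_
  induction N with
  | zero =>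
    simp [potential, psum, rmax, Real.zero_rpow hγ.ne',
      Real.zero_rpow (show 1 + γ ≠ 0 by linarith)]
  | succ N ih =>
    have e : psum d (N + 1) = psum d N + d (N + 1) := by
      rw [psum, psum, Finset.sum_range_succ]
    have h := potential_step hγ hγ1 (weight_pos γ).le (psum d N) (d (N + 1)) (rmax_nonneg d N)
    rw [← e] at h
    rw [Finset.sum_range_succ]
    change potential _ _ _ (max _ _) ≤ _
    linarith

lemma abs_slope_mul_le {γ K : ℝ} (hγ : 0 < γ) (hK : 0 ≤ K) {x m : ℝ} (hx : |x| ≤ m) (y : ℝ) :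
    |slope γ K x m * y| ≤ (K + 1) * (|y| ^ (1 + γ) + γ * m ^ (1 + γ)) := by
  have hm : 0 ≤ m := (abs_nonneg x).trans hx
  have hp : 0 ≤ 1 + γ := by linarith
  have hmγ := Real.rpow_nonneg hm γ
  have h1 : |K * phi γ x - m ^ γ * sgn x| ≤ (K + 1) * m ^ γ := by
    refine (abs_sub _ _).trans ?_
    rw [abs_mul, abs_mul, phi, abs_mul, abs_sgn, abs_of_nonneg hK, abs_of_nonneg hmγ,
      abs_of_nonneg (Real.rpow_nonneg (abs_nonneg x) γ)]
    have := mul_le_mul_of_nonneg_left (Real.rpow_le_rpow (abs_nonneg x) hx hγ.le) hK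
    linarith
  have h2 := young hγ hm (abs_nonneg y)
  rw [slope, abs_mul, abs_mul, abs_of_nonneg hp]
  calc (1 + γ) * |K * phi γ x - m ^ γ * sgn x| * |y|
      ≤ (1 + γ) * ((K + 1) * m ^ γ) * |y| := by gcongr
    _ = (K + 1) * ((1 + γ) * (m ^ γ * |y|)) := by ring
    _ ≤ _ := by gcongr

section Probability

variable {Ω : Type} {mΩ : MeasurableSpace Ω} {ℙ : Measure Ω} {N : ℕ}
  {𝒢 : ℕ → MeasurableSpace Ω} {d : ℕ → Ω → ℝ}

lemma measurable_psum (hmono : Monotone 𝒢)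
    (hd : ∀ k, 1 ≤ k → k ≤ N → Measurable[𝒢 k] (d k)) {k : ℕ} (hk : k ≤ N) :
    Measurable[𝒢 k] (fun ω => psum (fun j => d j ω) k) := by
  refine Finset.measurable_fun_sum _ fun j hj => ?_
  have hj := Finset.mem_range.1 hj
  exact (hd (j + 1) (by omega) (by omega)).mono (hmono (by omega)) le_rfl

lemma measurable_rmax (hmono : Monotone 𝒢)
    (hd : ∀ k, 1 ≤ k → k ≤ N → Measurable[𝒢 k] (d k)) {k : ℕ} (hk : k ≤ N) :
    Measurable[𝒢 k] (fun ω => rmax (fun j => d j ω) k) := by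
  induction k with
  | zero => exact measurable_const
  | succ k ih =>
    have h1 : Measurable[𝒢 (k + 1)] (fun ω => rmax (fun j => d j ω) k) :=
      (ih (by omega)).mono (hmono (by omega)) le_rfl
    have h2 := measurable_psum hmono hd hk
    have h3 : Measurable[𝒢 (k + 1)] (fun ω => |psum (fun j => d j ω) (k + 1)|) :=
      measurable_norm.comp h2
    exact Measurable.max h1 h3

lemma memLp_rmax {p : ENNReal} (hd : ∀ k, 1 ≤ k → k ≤ N → MemLp (d k) p ℙ) {k : ℕ}
    (hk : k ≤ N) : MemLp (fun ω => rmax (fun j => d j ω) k) p ℙ := by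
  induction k with
  | zero => exact MemLp.zero
  | succ k ih =>
    have h : MemLp (fun ω => psum (fun j => d j ω) (k + 1)) p ℙ := by
      refine memLp_finsetSum _ fun j hj => ?_
      have hj := Finset.mem_range.1 hj
      exact hd (j + 1) (by omega) (by omega)
    exact (ih (by omega)).sup h.norm

lemma measurable_slope {m : MeasurableSpace Ω} {γ K : ℝ} {x y : Ω → ℝ} (hx : Measurable[m] x)
    (hy : Measurable[m] y) : Measurable[m] (fun ω => slope γ K (x ω) (y ω)) := by
  have hs := measurable_sgn.comp hx
  have ha : Measurable[m] (fun ω => |x ω|) := measurable_norm.comp hx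
  exact (((hs.mul (ha.pow_const γ)).const_mul K).sub ((hy.pow_const γ).mul hs)).const_mul _

lemma integral_mul_eq_zero [IsFiniteMeasure ℙ] {m : MeasurableSpace Ω} (hm : m ≤ mΩ)
    {H f : Ω → ℝ} (hH : Measurable[m] H) (hf : Integrable f ℙ)
    (hHf : Integrable (fun ω => H ω * f ω) ℙ) (h0 : ℙ[f|m] =ᵐ[ℙ] 0) :
    ∫ ω, H ω * f ω ∂ℙ = 0 := by
  rw [← integral_condExp hm]
  have h1 : ℙ[H * f|m] =ᵐ[ℙ] H * ℙ[f|m] :=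
    condExp_mul_of_stronglyMeasurable_left hH.stronglyMeasurable hHf hf
  refine integral_eq_zero_of_ae ?_
  refine h1.trans ?_
  filter_upwards [h0] with ω hω
  simp [hω]

end Probability

end MDSMaximal

open MDSMaximal in
/-- Burkholder-type inequality, cf. (3.24). For every `γ ∈ (0,1)` there is
`A_γ > 0` such that for every martingale difference sequence `d_1, …, d_N`,
`E[max_{1≤k≤N} |∑_{j=1}^k d_j|^{1+γ}] ≤ A_γ ∑_{j=1}^N E|d_j|^{1+γ}`. -/
theorem mds_maximal_moment_inequality (γ : ℝ) (hγ : γ ∈ Set.Ioo (0:ℝ) 1) :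
    ∃ Aγ : ℝ, 0 < Aγ ∧
      ∀ (Ω : Type) (mΩ : MeasurableSpace Ω) (ℙ : Measure Ω),
        IsProbabilityMeasure ℙ →
      ∀ (N : ℕ) (hN : 1 ≤ N),
      ∀ 𝒢 : ℕ → MeasurableSpace Ω, (∀ k, 𝒢 k ≤ mΩ) → Monotone 𝒢 →
      ∀ d : ℕ → Ω → ℝ,
        (∀ k, 1 ≤ k → k ≤ N → Measurable[𝒢 k] (d k)) →
        (∀ k, 1 ≤ k → k ≤ N → Integrable (d k) ℙ) →
        (∀ k, 1 ≤ k → k ≤ N → ℙ[d k|𝒢 (k - 1)] =ᵐ[ℙ] 0) →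
        (∀ k, 1 ≤ k → k ≤ N → Integrable (fun ω => |d k ω| ^ (1 + γ)) ℙ) →
        ∫ ω, ((Finset.Icc 1 N).sup' (Finset.nonempty_Icc.2 hN)
              fun k => |∑ j ∈ Finset.Icc 1 k, d j ω|) ^ (1 + γ) ∂ℙ
          ≤ Aγ * ∑ j ∈ Finset.Icc 1 N, ∫ ω, |d j ω| ^ (1 + γ) ∂ℙ := by
  obtain ⟨hγ0, hγ1⟩ := hγ
  have hp : 0 < 1 + γ := by linarith
  have hK := weight_pos γ
  refine ⟨2 / γ * (2 * (1 + γ) * weight γ), by positivity, ?_⟩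
  intro Ω mΩ ℙ hℙ N hN 𝒢 h𝒢 hmono d hmeas hint hcond hpow
  have hLp : ∀ k, 1 ≤ k → k ≤ N → MemLp (d k) (ENNReal.ofReal (1 + γ)) ℙ := by
    intro k h1 h2
    have h := hpow k h1 h2
    rw [← integrable_norm_rpow_iff (hint k h1 h2).aestronglyMeasurable
      (by simpa using hp) ENNReal.ofReal_ne_top, ENNReal.toReal_ofReal hp.le]
    exact h
  have hM : ∀ k, k ≤ N → Integrable (fun ω => rmax (fun j => d j ω) k ^ (1 + γ)) ℙ := by
    intro k hk
    have h := (memLp_rmax hLp hk).integrable_norm_rpow (by simpa using hp)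
      ENNReal.ofReal_ne_top
    rw [ENNReal.toReal_ofReal hp.le] at h
    refine h.congr (Filter.Eventually.of_forall fun ω => ?_)
    simp only [Real.norm_eq_abs, abs_of_nonneg (rmax_nonneg _ k)]
  set H : ℕ → Ω → ℝ := fun k ω =>
    slope γ (weight γ) (psum (fun j => d j ω) k) (rmax (fun j => d j ω) k) with hHdef
  have hHm : ∀ k, k ≤ N → Measurable[𝒢 k] (H k) := fun k hk =>
    measurable_slope (measurable_psum hmono hmeas hk) (measurable_rmax hmono hmeas hk)
  have hHd : ∀ k, k < N → Integrable (fun ω => H k ω * d (k + 1) ω) ℙ := by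
    intro k hk
    refine Integrable.mono' (((hpow (k + 1) (by omega) hk).add
      ((hM k hk.le).const_mul γ)).const_mul (weight γ + 1)) ?_
      (Filter.Eventually.of_forall fun ω => abs_slope_mul_le hγ0 hK.le (abs_psum_le_rmax _ k) _)
    exact (((hHm k hk.le).mono (h𝒢 k) le_rfl).aestronglyMeasurable).mul
      (hint (k + 1) (by omega) hk).aestronglyMeasurable
  have hH0 : ∀ k, k < N → ∫ ω, H k ω * d (k + 1) ω ∂ℙ = 0 := fun k hk =>
    integral_mul_eq_zero (h𝒢 k) (hHm k hk.le) (hint (k + 1) (by omega) hk) (hHd k hk)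
      (hcond (k + 1) (by omega) hk)
  have hterm : ∀ k ∈ Finset.range N, Integrable (fun ω => H k ω * d (k + 1) ω
      + 2 * (1 + γ) * weight γ * |d (k + 1) ω| ^ (1 + γ)) ℙ := fun k hk =>
    (hHd k (Finset.mem_range.1 hk)).add
      ((hpow (k + 1) (by omega) (Finset.mem_range.1 hk)).const_mul _)
  have hsup : ∀ ω, 0 ≤ (Finset.Icc 1 N).sup' (Finset.nonempty_Icc.2 hN)
      (fun k => |∑ j ∈ Finset.Icc 1 k, d j ω|) := fun ω =>
    (abs_nonneg _).trans (Finset.le_sup' (fun k => |∑ j ∈ Finset.Icc 1 k, d j ω|)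
      (Finset.mem_Icc.2 ⟨le_rfl, hN⟩))
  calc _ ≤ ∫ ω, 2 / γ * ∑ k ∈ Finset.range N, (H k ω * d (k + 1) ω
      + 2 * (1 + γ) * weight γ * |d (k + 1) ω| ^ (1 + γ)) ∂ℙ := by
        refine integral_mono_of_nonneg
          (Filter.Eventually.of_forall fun ω => Real.rpow_nonneg (hsup ω) _)
          ((integrable_finsetSum _ hterm).const_mul _)
          (Filter.Eventually.of_forall fun ω => ?_)
        have h1 : (Finset.Icc 1 N).sup' (Finset.nonempty_Icc.2 hN)
            (fun k => |∑ j ∈ Finset.Icc 1 k, d j ω|) ≤ rmax (fun j => d j ω) N := by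
          refine Finset.sup'_le _ _ fun k hk => ?_
          rw [← psum_eq (fun j => d j ω) k]
          exact (abs_psum_le_rmax _ k).trans (rmax_mono _ (Finset.mem_Icc.1 hk).2)
        have h2 := Real.rpow_le_rpow (hsup ω) h1 hp.le
        have h3 := mul_le_mul_of_nonneg_left (pathwise hγ0 hγ1 (fun j => d j ω) N)
          (show 0 ≤ 2 / γ by positivity)
        refine h2.trans (le_trans (le_of_eq ?_) h3)
        field_simp
    _ = 2 / γ * ∑ k ∈ Finset.range N,
          (2 * (1 + γ) * weight γ * ∫ ω, |d (k + 1) ω| ^ (1 + γ) ∂ℙ) := by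
        rw [integral_const_mul, integral_finsetSum _ hterm]
        congr 1
        refine Finset.sum_congr rfl fun k hk => ?_
        have hk := Finset.mem_range.1 hk
        rw [integral_add (hHd k hk) ((hpow (k + 1) (by omega) hk).const_mul _), hH0 k hk,
          zero_add, integral_const_mul]
    _ = _ := by
        rw [← psum_eq (fun j => ∫ ω, |d j ω| ^ (1 + γ) ∂ℙ) N, psum, ← Finset.mul_sum]
        ring
end
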